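/- arXiv:0907.2865 — 3 statements merged into one kernel-verified Lean document; each statement's English description precedes it below -/
import Mathlib

section
/- Let k ≥ 2, let 1 ≤ t_1 ≤ t_2 ≤ … ≤ t_k = t be integers whose greatest common divisor equals 1, let F be a field of characteristic 0, and let a_{t_1}, a_{t_2}, …, a_{t_k} be algebraically independent variables over F. Then the Galois group of the polynomial f(x) = x^t + Σ_{i=1}^{k} a_{t_i} x^{t−t_i} over the rational function field F(a_{t_1}, a_{t_2}, …, a_{t_k}) is isomorphic to the symmetric group Sym(t) of degree t. -/
open scoped BigOperators

/-!
Let `f` be the polynomial and `M` an algebraic closure of its coefficient field.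

* If `x ≠ y` are roots of `f`, then `x ^ (t - e s) ≠ y ^ (t - e s)` for some `s`, as the exponents
  `e i` have greatest common divisor `1`, and the equations `f(x) = f(y) = 0` express the constant
  term and the coefficient `a s` rationally through `x`, `y` and the other coefficients. So
  exchanging these two coefficients for `x` and `y` gives another transcendence basis of `M`, and
  moving one such basis to another moves `(x, y)` to any other pair of distinct roots while fixing
  all coefficients: the Galois group is doubly transitive.
* Differentiating along a coefficient shows that `f` has a nonzero critical point `β`, that it is
  nondegenerate, and that no other critical point has the same critical value `v = f(β)`. So over
  `X = 0` the roots of `f - v + X` over `M(X)` collide in exactly one pair, and inertia there is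
  generated by a transposition. As the constant term of `f` is a free variable, `f - v + X` is a
  specialization of `f`, so the Galois group of `f` contains a transposition too.

A doubly transitive permutation group containing a transposition is the full symmetric group.
-/

section

open Polynomial

theorem toPermHom_surjective_of_isSwap {G α : Type*} [Group G] [MulAction G α] [Finite α]
    [DecidableEq α] [MulAction.IsPreprimitive G α] {g : G}
    (hg : (MulAction.toPermHom G α g).IsSwap) : Function.Surjective (MulAction.toPermHom G α) := by
  let f : α →ₑ[(MulAction.toPermHom G α).rangeRestrict] α := ⟨id, fun _ _ => rfl⟩
  have hprim : MulAction.IsPreprimitive (MulAction.toPermHom G α).range α :=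
    .of_surjective (f := f) Function.surjective_id
  exact MonoidHom.range_eq_top.1
    (Equiv.Perm.subgroup_eq_top_of_isPreprimitive_of_isSwap_mem hprim _ hg ⟨g, rfl⟩)

theorem isSwap_toPermHom_of_equivariant {G H α β : Type*} [Group G] [MulAction G α] [Group H]
    [MulAction H β] [DecidableEq α] [DecidableEq β] (ε : α ≃ β) {g : G} {h : H}
    (hε : ∀ z, ε (g • z) = h • ε z) (hg : (MulAction.toPermHom G α g).IsSwap) :
    (MulAction.toPermHom H β h).IsSwap := by
  obtain ⟨x, y, hxy, hswap⟩ := hg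
  refine ⟨ε x, ε y, ε.injective.ne hxy, Equiv.ext <| ε.surjective.forall.2 fun z => ?_⟩
  have hz : g • z = Equiv.swap x y z := congr($hswap z)
  rw [MulAction.toPermHom_apply, MulAction.toPerm_apply, ← hε, hz, ε.injective.map_swap]

theorem eq_of_pow_eq_pow_of_gcd_eq_one {M ι : Type*} [Field M] {s : Finset ι} {t : ℕ} {e : ι → ℕ}
    (het : ∀ i ∈ s, e i ≤ t) (ht : t ≠ 0) (hgcd : s.gcd e = 1) {x y : M} (hxy : x ^ t = y ^ t)
    (h : ∀ i ∈ s, x ^ (t - e i) = y ^ (t - e i)) : x = y := by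
  rcases eq_or_ne y 0 with rfl | hy
  · exact eq_zero_of_pow_eq_zero (hxy.trans (zero_pow ht))
  have hdvd {n : ℕ} (hn : x ^ n = y ^ n) : orderOf (x / y) ∣ n :=
    orderOf_dvd_of_pow_eq_one (by rw [div_pow, hn, div_self (pow_ne_zero _ hy)])
  have h1 : orderOf (x / y) ∣ s.gcd e := Finset.dvd_gcd fun i hi =>
    (Nat.dvd_sub_iff_right (het i hi) (hdvd hxy)).1 (hdvd (h i hi))
  rwa [hgcd, Nat.dvd_one, orderOf_eq_one_iff, div_eq_one_iff_eq hy] at h1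

theorem pow_ne_pow_of_algebraicIndependent {R A ι : Type*} [CommRing R] [CommRing A]
    [Algebra R A] [Nontrivial R] {v : ι → A} (hv : AlgebraicIndependent R v) {i j : ι}
    (hij : i ≠ j) {n : ℕ} (hn : n ≠ 0) : v i ^ n ≠ v j ^ n := by
  intro h
  have hX : (MvPolynomial.X i ^ n : MvPolynomial ι R) = MvPolynomial.X j ^ n :=
    algebraicIndependent_iff_injective_aeval.1 hv (by simpa using h)
  classical
  have := congrArg (MvPolynomial.eval (Pi.single i (1 : R))) hX
  simp [hij.symm, hn] at this

theorem exists_algEquiv_apply_eq_of_isTranscendenceBasis {F M ι : Type*} [Field F] [Field M]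
    [Algebra F M] [IsAlgClosed M] {v w : ι → M}
    (hv : IsTranscendenceBasis F v) (hw : IsTranscendenceBasis F w) :
    ∃ σ : M ≃ₐ[F] M, ∀ i, σ (v i) = w i := by
  have := IsAlgClosed.isAlgClosure_of_transcendence_basis v hv
  have := IsAlgClosed.isAlgClosure_of_transcendence_basis w hw
  let ε : Algebra.adjoin F (Set.range v) ≃ₐ[F] Algebra.adjoin F (Set.range w) :=
    hv.1.aevalEquiv.symm.trans hw.1.aevalEquiv
  have hε (i : ι) : ε ⟨v i, Algebra.subset_adjoin ⟨i, rfl⟩⟩ =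
      ⟨w i, Algebra.subset_adjoin ⟨i, rfl⟩⟩ := by
    have hX {u : ι → M} (hu : AlgebraicIndependent F u) : hu.aevalEquiv (MvPolynomial.X i) =
      ⟨u i, Algebra.subset_adjoin ⟨i, rfl⟩⟩ := Subtype.ext (by simp)
    simp only [ε, AlgEquiv.trans_apply, ← hX hv.1, ← hX hw.1, AlgEquiv.symm_apply_apply]
  have hσ := IsAlgClosure.equivOfEquiv_algebraMap M M ε.toRingEquiv
  refine ⟨.ofRingEquiv (f := IsAlgClosure.equivOfEquiv M M ε.toRingEquiv) fun r => ?_, fun i => ?_⟩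
  · simpa [← IsScalarTower.algebraMap_apply] using hσ (algebraMap F _ r)
  · exact (hσ ⟨v i, _⟩).trans (congrArg Subtype.val (hε i))

theorem isTranscendenceBasis_of_forall_isAlgebraic {F M ι : Type*} [Field F] [Field M]
    [Algebra F M] [Finite ι] {v w : ι → M} (hv : IsTranscendenceBasis F v)
    (h : ∀ i, IsAlgebraic (Algebra.adjoin F (Set.range w)) (v i)) : IsTranscendenceBasis F w :=
  have : Algebra.IsAlgebraic (Algebra.adjoin F (Set.range w)) M := hv.isAlgebraic_iff.2 h
  Algebra.IsAlgebraic.isTranscendenceBasis_of_lift_le_trdeg_of_finite F w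
    hv.lift_cardinalMk_eq_trdeg.le

theorem algebraicIndependent_C_comp_add_single {F A ι : Type*} [CommRing F] [CommRing A]
    [Algebra F A] [DecidableEq ι] {a : ι → A} (ha : AlgebraicIndependent F a) (l : ι) (v : A) :
    AlgebraicIndependent F (C ∘ a + Pi.single l (X - C v)) := by
  refine .of_comp ((aeval v).restrictScalars F) ?_
  convert ha using 1
  funext i
  rcases eq_or_ne i l with rfl | hi
  · simp
  · simp [hi]

theorem exists_algHom_apply_eq_of_algebraicIndependent {F K N ι : Type*} [Field F] [Field K]
    [Field N] [Algebra F K] [Algebra F N] {a : ι → K} {b : ι → N} (ha : AlgebraicIndependent F a)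
    (hK : IntermediateField.adjoin F (Set.range a) = ⊤) (hb : AlgebraicIndependent F b) :
    ∃ φ : K →ₐ[F] N, ∀ i, φ (a i) = b i := by
  let ε : K ≃ₐ[F] FractionRing (MvPolynomial ι F) :=
    (IntermediateField.topEquiv.symm.trans (IntermediateField.equivOfEq hK.symm)).trans
      ha.aevalEquivField.symm
  refine ⟨(IntermediateField.val _).comp (hb.aevalEquivField.toAlgHom.comp ε.toAlgHom), fun i => ?_⟩
  have hε : ε (a i) = algebraMap (MvPolynomial ι F) _ (.X i) := by
    rw [AlgEquiv.trans_apply, AlgEquiv.symm_apply_eq]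
    apply Subtype.ext
    simp
  simp [hε]

theorem algHom_ext_of_intermediateField_adjoin_eq_top {F K M : Type*} [Field F] [Field K] [Field M]
    [Algebra F K] [Algebra F M] {s : Set K} (hs : IntermediateField.adjoin F s = ⊤)
    {φ ψ : K →ₐ[F] M} (h : ∀ x ∈ s, φ x = ψ x) : φ = ψ := by
  have heq : φ.comp (IntermediateField.val ⊤) = ψ.comp (IntermediateField.val ⊤) :=
    IntermediateField.algHom_ext_of_eq_adjoin F hs.symm h
  exact AlgHom.ext fun x => congr($heq ⟨x, IntermediateField.mem_top⟩)

theorem isTranscendenceBasis_algebraMap_comp_of_adjoin_eq_top {F K M ι : Type*} [Field F] [Field K]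
    [Algebra F K] [Field M] [Algebra K M] [Algebra F M] [IsScalarTower F K M]
    [Algebra.IsAlgebraic K M] {a : ι → K} (ha : AlgebraicIndependent F a)
    (hK : IntermediateField.adjoin F (Set.range a) = ⊤) :
    IsTranscendenceBasis F (algebraMap K M ∘ a) := by
  refine IsTranscendenceBasis.algebraMap_comp <| ha.isTranscendenceBasis_iff_isAlgebraic.2
    ⟨fun x => IntermediateField.isAlgebraic_adjoin_iff.1 ?_⟩
  exact isAlgebraic_algebraMap (⟨x, hK ▸ IntermediateField.mem_top⟩ : IntermediateField.adjoin F _)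

theorem adjoin_range_algebraMap_X_eq_top (F K ι : Type*) [Field F] [Field K]
    [Algebra (MvPolynomial ι F) K] [Algebra F K] [IsScalarTower F (MvPolynomial ι F) K]
    [IsFractionRing (MvPolynomial ι F) K] :
    IntermediateField.adjoin F (Set.range fun i : ι =>
      algebraMap (MvPolynomial ι F) K (MvPolynomial.X i)) = ⊤ := by
  refine top_unique fun z _ => ?_
  have hmem (p : MvPolynomial ι F) : algebraMap (MvPolynomial ι F) K p ∈
      IntermediateField.adjoin F (Set.range fun i : ι =>
        algebraMap (MvPolynomial ι F) K (MvPolynomial.X i)) := by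
    refine IntermediateField.algebra_adjoin_le_adjoin F _ ?_
    rw [Algebra.adjoin_range_eq_range_aeval]
    exact ⟨p, (MvPolynomial.aeval_algebraMap_apply K MvPolynomial.X p).trans (by simp)⟩
  obtain ⟨p, q, _, rfl⟩ := IsFractionRing.div_surjective (A := MvPolynomial ι F) z
  exact div_mem (hmem p) (hmem q)

theorem formallyEtale_of_isAlgebraic (A M : Type*) [CommRing A] [IsDomain A] [CharZero A] [Field M]
    [Algebra A M] [FaithfulSMul A M] [Algebra.IsAlgebraic A M] : Algebra.FormallyEtale A M := by
  let K := FractionRing A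
  let : Algebra K M := FractionRing.liftAlgebra A M
  have : IsScalarTower A K M := FractionRing.isScalarTower_liftAlgebra A M
  have : Algebra.IsAlgebraic K M := (IsFractionRing.comap_isAlgebraic_iff (A := A)).1 inferInstance
  have : Algebra.FormallyEtale A K := .of_isLocalization (nonZeroDivisors A)
  have : Algebra.FormallyEtale K M := .of_isSeparable K M
  exact .comp A K M

theorem exists_derivation_apply_algebraMap_eq {R A M : Type*} [CommRing R] [CommRing A]
    [CommRing M] [Algebra R A] [Algebra A M] [Algebra R M] [IsScalarTower R A M]
    [Algebra.FormallyEtale A M] (d : Derivation R A M) :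
    ∃ D : Derivation R M M, ∀ x, D (algebraMap A M x) = d x := by
  let l := d.liftKaehlerDifferential.liftBaseChange M ∘ₗ
    (KaehlerDifferential.tensorKaehlerEquivOfFormallyEtale R A M).symm.toLinearMap
  refine ⟨l.compDer (KaehlerDifferential.D R M), fun x => ?_⟩
  simp [l, KaehlerDifferential.tensorKaehlerEquivOfFormallyEtale_symm_D_algebraMap]

theorem exists_derivation_apply_eq_of_isTranscendenceBasis {F M ι : Type*} [Field F] [CharZero F]
    [Field M] [Algebra F M] {a : ι → M} (ha : IsTranscendenceBasis F a) (d : ι → M) :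
    ∃ D : Derivation F M M, ∀ i, D (a i) = d i := by
  let A := MvPolynomial ι F
  let : Algebra A M := (MvPolynomial.aeval a).toAlgebra
  have : IsScalarTower F A M := .of_algebraMap_eq' (MvPolynomial.aeval a).comp_algebraMap.symm
  have : FaithfulSMul A M := (faithfulSMul_iff_algebraMap_injective A M).2 ha.1
  have : Algebra.IsAlgebraic (Algebra.adjoin F (Set.range a)) M := ha.isAlgebraic
  have : Algebra.IsAlgebraic A M :=
    .of_ringHom_of_comp_eq ha.1.aevalEquiv (RingHom.id M) ha.1.aevalEquiv.surjective
      Function.injective_id (by ext <;> simp [RingHom.algebraMap_toAlgebra])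
  have : CharZero A := charZero_of_injective_algebraMap (algebraMap F A).injective
  have : Algebra.FormallyEtale A M := formallyEtale_of_isAlgebraic A M
  obtain ⟨D, hD⟩ := exists_derivation_apply_algebraMap_eq
    (MvPolynomial.mkDerivation F d : Derivation F A M)
  exact ⟨D, fun i => by simpa [RingHom.algebraMap_toAlgebra, A] using hD (.X i)⟩

theorem card_roots_le_card_toFinset_roots_add_one {A : Type*} [CommRing A] [IsDomain A]
    [DecidableEq A] {p : A[X]} {β : A} (hβ : (derivative (derivative p)).eval β ≠ 0)
    (h : ∀ x, p.eval x = 0 → (derivative p).eval x = 0 → x = β) :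
    p.roots.card ≤ p.roots.toFinset.card + 1 := by
  have hp : p ≠ 0 := by
    rintro rfl
    simp at hβ
  have hnodup : (p.roots.erase β).Nodup := by
    refine Multiset.nodup_iff_count_le_one.2 fun x => ?_
    rcases eq_or_ne x β with rfl | hx
    · rw [Multiset.count_erase_self, count_roots, Nat.sub_le_iff_le_add]
      exact not_lt.1 fun hlt => hβ (isRoot_iterate_derivative_of_lt_rootMultiplicity hlt)
    · rw [Multiset.count_erase_of_ne hx, count_roots]
      refine not_lt.1 fun hlt => hx ?_
      obtain ⟨h0, h1⟩ := (one_lt_rootMultiplicity_iff_isRoot hp).1 hlt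
      exact h x h0 h1
  calc p.roots.card ≤ (p.roots.erase β).card + 1 := by
        rw [← Nat.pred_le_iff, Multiset.card_erase_eq_ite]
        split_ifs
        exacts [le_rfl, Nat.pred_le _]
    _ = (p.roots.erase β).toFinset.card + 1 := by rw [Multiset.toFinset_card_of_nodup hnodup]
    _ ≤ p.roots.toFinset.card + 1 := by
        gcongr
        exact Multiset.toFinset_subset.2 (Multiset.erase_subset _ _)

theorem sq_X_sub_C_dvd_sub_C {A : Type*} [CommRing A] {p : A[X]} {β : A}
    (hβ : (derivative p).eval β = 0) : (X - C β) ^ 2 ∣ p - C (p.eval β) := by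
  obtain ⟨q, hq⟩ := X_sub_C_dvd_sub_C_eval (p := p) (a := β)
  have hqβ : q.IsRoot β := by
    simpa [hβ, eq_comm] using congrArg (fun r => (derivative r).eval β) hq
  obtain ⟨r, hr⟩ := dvd_iff_isRoot.2 hqβ
  exact ⟨r, by rw [hq, hr]; ring⟩

theorem inertia_ne_bot_of_map_le_sq {R B G : Type*} [CommRing R] [IsDomain R] [CommRing B]
    [IsDedekindDomain B] [Algebra R B] [Module.Finite R B] [Module.Flat R B]
    [Group G] [Finite G] [MulSemiringAction G B] [IsGaloisGroup G R B]
    {p : Ideal R} [p.IsPrime] [PerfectField p.ResidueField] (hp : p ≠ ⊥) (P : Ideal B) [P.IsPrime]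
    [P.LiesOver p] (h : p.map (algebraMap R B) ≤ P ^ 2) : P.inertia G ≠ ⊥ := by
  have hcard : Nat.card (P.inertia G) = P.ramificationIdx R := by
    rw [Ideal.card_inertia_eq_ramificationIdxIn p P,
      Ideal.ramificationIdxIn_eq_ramificationIdx p P G]
  have hram : P.ramificationIdx R ≠ 1 := by
    rwa [← Ideal.ramificationIdx'_eq_ramificationIdx p P hp, Ideal.ramificationIdx'_ne_one_iff]
    exact Ideal.map_le_iff_le_comap.2 (Ideal.over_def P p).le
  intro hbot
  exact hram (by rw [← hcard, hbot, Subgroup.card_bot])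

section IntegralClosure

variable {R L : Type*} [CommRing R] [Field L] [Algebra R L] {f : R[X]}

theorem splits_map_integralClosure (hf : f.Monic) (hs : (f.map (algebraMap R L)).Splits) :
    (f.map (algebraMap R (integralClosure R L))).Splits := by
  rw [IsScalarTower.algebraMap_eq R (integralClosure R L) L, ← map_map] at hs
  refine hs.of_splits_map_of_injective (FaithfulSMul.algebraMap_injective _ L) fun r hr => ?_
  rw [map_map, ← IsScalarTower.algebraMap_eq, mem_roots', IsRoot.def, eval_map] at hr
  exact ⟨⟨r, f, hf, hr.2⟩, rfl⟩

theorem image_val_rootSet_integralClosure (hf : f.Monic) (hs : (f.map (algebraMap R L)).Splits) :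
    (integralClosure R L).val '' f.rootSet (integralClosure R L) = f.rootSet L :=
  (splits_map_integralClosure hf hs).image_rootSet_of_map_ne_zero _ (hf.map _).ne_zero

variable {N : Type*} [Field N] [Algebra N L] [Algebra R N] [IsScalarTower R N L]

theorem splits_map_of_isSplittingField_map (f : R[X])
    [IsSplittingField N L (f.map (algebraMap R N))] : (f.map (algebraMap R L)).Splits := by
  rw [IsScalarTower.algebraMap_eq R N L, ← map_map]
  exact IsSplittingField.splits L (f.map (algebraMap R N))

theorem faithfulSMul_rootSet_integralClosure (hf : f.Monic)
    [IsSplittingField N L (f.map (algebraMap R N))] :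
    FaithfulSMul Gal(L/N) (f.rootSet (integralClosure R L)) := by
  classical
  have hs := splits_map_of_isSplittingField_map (N := N) (L := L) f
  refine ⟨fun {σ τ} h => AlgEquiv.coe_toAlgHom_injective (AlgHom.ext_of_adjoin_eq_top
    (IsSplittingField.adjoin_rootSet L (f.map (algebraMap R N))) fun z hz => ?_)⟩
  rw [rootSet_def, aroots_map, ← rootSet_def, ← image_val_rootSet_integralClosure hf hs] at hz
  obtain ⟨z, hz, rfl⟩ := hz
  exact congrArg (fun x : f.rootSet (integralClosure R L) => (x.1 : L)) (h ⟨z, hz⟩)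

end IntegralClosure

theorem exists_isSwap_toPermHom_rootSet_of_map_le_sq {R N L : Type*} [CommRing R]
    [IsDedekindDomain R] [Field N] [Algebra R N] [IsFractionRing R N] [Field L] [Algebra N L]
    [Algebra R L] [IsScalarTower R N L] [IsGalois N L] {f : R[X]} (hf : f.Monic)
    [IsSplittingField N L (f.map (algebraMap R N))]
    [DecidableEq (f.rootSet (integralClosure R L))]
    {p : Ideal R} [p.IsPrime] (hp : p ≠ ⊥) [PerfectField p.ResidueField]
    (P : Ideal (integralClosure R L)) [P.IsPrime] [P.LiesOver p]
    (hP : p.map (algebraMap R (integralClosure R L)) ≤ P ^ 2)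
    (hcard : f.natDegree ≤ (f.rootSet (integralClosure R L ⧸ P)).ncard + 1) :
    ∃ σ : Gal(L/N), (MulAction.toPermHom Gal(L/N) (f.rootSet (integralClosure R L)) σ).IsSwap := by
  let B := integralClosure R L
  have hs := splits_map_of_isSplittingField_map (N := N) (L := L) f
  have : FiniteDimensional N L := IsSplittingField.finiteDimensional L (f.map (algebraMap R N))
  have : IsDedekindDomain B := integralClosure.isDedekindDomain R N L
  have : IsFractionRing B L := integralClosure.isFractionRing_of_finite_extension N L
  have : Module.Finite R B := IsIntegralClosure.finite R N L B
  have : IsGaloisGroup Gal(L/N) R B := IsGaloisGroup.of_isFractionRing _ _ _ N L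
  have : Module.IsTorsionFree R L := .trans_faithfulSMul R N L
  have : FaithfulSMul Gal(L/N) (f.rootSet B) := faithfulSMul_rootSet_integralClosure hf
  obtain ⟨σ, hσ, hσ1⟩ :=
    (Subgroup.bot_or_exists_ne_one _).resolve_left
      (inertia_ne_bot_of_map_le_sq (G := Gal(L/N)) hp P hP)
  have hcard' : (f.rootSet B).ncard ≤ (f.rootSet (B ⧸ P)).ncard + 1 :=
    (ncard_rootSet_le f B).trans hcard
  have hσ' := (splits_map_integralClosure hf
    hs).toPermHom_apply_eq_one_or_isSwap_of_ncard_le_of_mem_inertia P hcard' σ hσ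
  refine ⟨σ, hσ'.resolve_left fun h => hσ1 (MulAction.toPerm_injective (β := f.rootSet B) ?_)⟩
  exact h.trans (map_one (MulAction.toPermHom Gal(L/N) (f.rootSet B))).symm

theorem exists_isSwap_toPermHom_gal_of_map_eq {R K N L M : Type*} [CommRing R] [Field K] [Field N]
    [Field L] [Field M] [Algebra R N] [Algebra N L] [Algebra R L] [IsScalarTower R N L]
    [Algebra K M] {f : K[X]} {g : R[X]} (φ : K →+* N) (hfg : f.map φ = g.map (algebraMap R N))
    (hg : g.Monic) [IsSplittingField N L (g.map (algebraMap R N))]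
    [Fact (f.map (algebraMap K M)).Splits] [DecidableEq (g.rootSet (integralClosure R L))]
    [DecidableEq (f.rootSet M)] {σ : Gal(L/N)}
    (hσ : (MulAction.toPermHom Gal(L/N) (g.rootSet (integralClosure R L)) σ).IsSwap) :
    ∃ τ : f.Gal, (MulAction.toPermHom f.Gal (f.rootSet M) τ).IsSwap := by
  let : Algebra K N := φ.toAlgebra
  let : Algebra K L := ((algebraMap N L).comp φ).toAlgebra
  have : IsScalarTower K N L := .of_algebraMap_eq' rfl
  have hs := splits_map_of_isSplittingField_map (N := N) (L := L) g
  have hmap : f.map (algebraMap K L) = g.map (algebraMap R L) := by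
    rw [IsScalarTower.algebraMap_eq R N L, ← map_map, ← hfg, map_map]
    rfl
  have : Fact (f.map (algebraMap K L)).Splits := ⟨hmap ▸ hs⟩
  have hroot : (integralClosure R L).val '' g.rootSet (integralClosure R L) = f.rootSet L := by
    classical
    rw [image_val_rootSet_integralClosure hg hs, rootSet_def, rootSet_def, aroots, aroots, hmap]
  let ε : g.rootSet (integralClosure R L) ≃ f.rootSet L :=
    (Equiv.Set.image _ _ Subtype.val_injective).trans (Equiv.setCongr hroot)
  let δ : f.rootSet L ≃ f.rootSet M :=
    (Gal.rootsEquivRoots f L).symm.trans (Gal.rootsEquivRoots f M)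
  refine ⟨Gal.restrict f L (σ.restrictScalars K),
    isSwap_toPermHom_of_equivariant (ε.trans δ) (fun z => ?_) hσ⟩
  have hε : ε (σ • z) = Gal.restrict f L (σ.restrictScalars K) • ε z :=
    Subtype.ext (Gal.restrict_smul (σ.restrictScalars K) (ε z)).symm
  simp [hε, δ, Gal.smul_def]

/-- The polynomial `h(x) + X` in `x`, over `E[X]`: its roots are the preimages of `-X` under `h`,
and it specializes to `h` at `X = 0`. -/
noncomputable def pencil {E : Type*} [CommRing E] (h : E[X]) : E[X][X] :=
  h.map C + C X

namespace pencil

section CommRing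

variable {E S : Type*} [CommRing E] [CommRing S] {h : E[X]}

theorem monic (hm : h.Monic) (hn : 0 < h.natDegree) : (pencil h).Monic :=
  (hm.map C).add_of_left <| degree_C_le.trans_lt <| by
    rwa [degree_map_eq_of_injective C_injective, ← natDegree_pos_iff_degree_pos]

theorem natDegree (h : E[X]) : (pencil h).natDegree = h.natDegree := by
  rw [pencil, natDegree_add_C, natDegree_map_eq_of_injective C_injective]

theorem map_of_map_X_eq_zero (ψ : E[X] →+* S) (hψ : ψ X = 0) :
    (pencil h).map ψ = h.map (ψ.comp C) := by
  simp [pencil, map_map, hψ]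

theorem algebraMap_X_eq_of_aeval_eq_zero [Algebra E[X] S] {β : E} {q : E[X]}
    (hq : h = (X - C β) ^ 2 * q) {r : S} (hr : aeval r (pencil h) = 0) :
    algebraMap E[X] S X = -((r - algebraMap E[X] S (C β)) ^ 2 * aeval r (q.map C)) := by
  simp only [pencil, hq, Polynomial.map_mul, Polynomial.map_pow, Polynomial.map_sub, map_X, map_C,
    map_add, map_mul, map_pow, map_sub, aeval_X, aeval_C] at hr
  linear_combination hr

end CommRing

section IsDomain

variable {E S : Type*} [Field E] [CommRing S] [IsDomain S] [Algebra E[X] S] {h : E[X]}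

theorem algebraMap_C_mem_rootSet (hm : h ≠ 0) (hX : algebraMap E[X] S X = 0) {x : E}
    (hx : h.IsRoot x) : algebraMap E[X] S (C x) ∈ (pencil h).rootSet S := by
  rw [mem_rootSet', ← eval_map_algebraMap, map_of_map_X_eq_zero _ hX, ← RingHom.comp_apply,
    eval_map_apply, hx.eq_zero, map_zero]
  exact ⟨(Polynomial.map_ne_zero_iff (RingHom.injective _)).2 hm, rfl⟩

theorem card_toFinset_roots_le_ncard_rootSet [DecidableEq E] (hm : h ≠ 0)
    (hX : algebraMap E[X] S X = 0) : h.roots.toFinset.card ≤ ((pencil h).rootSet S).ncard := by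
  rw [← Set.ncard_coe_finset, ← Set.ncard_image_of_injective _
    ((algebraMap E[X] S).comp C).injective]
  refine Set.ncard_le_ncard ?_ (rootSet_finite _ _)
  rintro _ ⟨x, hx, rfl⟩
  exact algebraMap_C_mem_rootSet hm hX (isRoot_of_mem_roots (Multiset.mem_toFinset.1 hx))

end IsDomain

theorem map_span_X_le_sq {E B : Type*} [Field E] [CommRing B] [IsDomain B] [Algebra E[X] B]
    {h : E[X]} (hm : h ≠ 0) {β : E} (hβ : (X - C β) ^ 2 ∣ h)
    (hs : ((pencil h).map (algebraMap E[X] B)).Splits) (P : Ideal B) [P.IsPrime]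
    (hX : algebraMap E[X] B X ∈ P) :
    (Ideal.span {X}).map (algebraMap E[X] B) ≤ P ^ 2 := by
  have hXP : algebraMap E[X] (B ⧸ P) X = 0 := Ideal.Quotient.eq_zero_iff_mem.2 hX
  have hβP : algebraMap E[X] (B ⧸ P) (C β) ∈ (pencil h).rootSet (B ⧸ P) :=
    algebraMap_C_mem_rootSet hm hXP (dvd_iff_isRoot.1 ((dvd_pow_self _ two_ne_zero).trans hβ))
  rw [← hs.image_rootSet_of_map_ne_zero (Ideal.Quotient.mkₐ E[X] P) (mem_rootSet'.1 hβP).1] at hβP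
  obtain ⟨r, hr, hrβ⟩ := hβP
  obtain ⟨q, hq⟩ := hβ
  rw [Ideal.map_span, Set.image_singleton, Ideal.span_singleton_le_iff_mem,
    algebraMap_X_eq_of_aeval_eq_zero hq (mem_rootSet'.1 hr).2]
  have hrP : r - algebraMap E[X] B (C β) ∈ P := Ideal.Quotient.eq.1 hrβ
  exact neg_mem (Ideal.mul_mem_right _ _ (Ideal.pow_mem_pow hrP 2))

theorem exists_isSwap_toPermHom_rootSet {E N L : Type*} [Field E] [CharZero E] [Field N]
    [Algebra E[X] N] [IsFractionRing E[X] N] [Field L] [Algebra N L] [Algebra E[X] L]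
    [IsScalarTower E[X] N L] {h : E[X]} (hm : h.Monic) {β : E} (hβ : (X - C β) ^ 2 ∣ h)
    [IsSplittingField N L ((pencil h).map (algebraMap E[X] N))] [DecidableEq E]
    [DecidableEq ((pencil h).rootSet (integralClosure E[X] L))]
    (hcard : h.natDegree ≤ h.roots.toFinset.card + 1) :
    ∃ σ : Gal(L/N), (MulAction.toPermHom Gal(L/N)
      ((pencil h).rootSet (integralClosure E[X] L)) σ).IsSwap := by
  let B := integralClosure E[X] L
  have : CharZero N := charZero_of_injective_algebraMap (IsFractionRing.injective E[X] N)
  have : Normal N L := .of_isSplittingField ((pencil h).map (algebraMap E[X] N))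
  have : FiniteDimensional N L :=
    IsSplittingField.finiteDimensional L ((pencil h).map (algebraMap E[X] N))
  have : IsGalois N L := ⟨⟩
  have : Module.IsTorsionFree E[X] L := .trans_faithfulSMul E[X] N L
  let p : Ideal E[X] := Ideal.span {X}
  have : p.IsPrime := (Ideal.span_singleton_prime X_ne_zero).2 prime_X
  have : CharZero p.ResidueField :=
    charZero_of_injective_ringHom ((algebraMap E[X] p.ResidueField).comp C).injective
  obtain ⟨⟨P, _, _⟩⟩ := p.nonempty_primesOver (S := B)
  have hXP : algebraMap E[X] B X ∈ P := by
    have hX : (X : E[X]) ∈ p := Ideal.mem_span_singleton_self X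
    rwa [Ideal.over_def P p] at hX
  have hn : 0 < h.natDegree := by
    have h2 := natDegree_le_of_dvd hβ hm.ne_zero
    rw [natDegree_pow, natDegree_X_sub_C] at h2
    exact two_pos.trans_le h2
  have hs : ((pencil h).map (algebraMap E[X] B)).Splits :=
    splits_map_integralClosure (monic hm hn) (splits_map_of_isSplittingField_map (N := N) _)
  refine exists_isSwap_toPermHom_rootSet_of_map_le_sq (monic hm hn)
    (Ideal.span_singleton_eq_bot.not.2 X_ne_zero) P (map_span_X_le_sq hm.ne_zero hβ hs P hXP) ?_
  rw [natDegree]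
  exact hcard.trans (Nat.add_le_add_right (card_toFinset_roots_le_ncard_rootSet hm.ne_zero
    (Ideal.Quotient.eq_zero_iff_mem.2 hXP)) 1)

end pencil

/-- The polynomial `x ^ t + ∑ i, a i * x ^ (t - e i)`. The exponents `e i` need not be distinct, and
those with `e i > t` are truncated to `t`. -/
noncomputable def sparsePoly {ι R : Type*} [Fintype ι] [CommRing R] (t : ℕ) (e : ι → ℕ)
    (a : ι → R) : R[X] :=
  X ^ t + ∑ i, C (a i) * X ^ (t - e i)

namespace sparsePoly

variable {ι R S : Type*} [Fintype ι] [CommRing R] [CommRing S] {t : ℕ} {e : ι → ℕ}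

theorem map (φ : R →+* S) (a : ι → R) :
    (sparsePoly t e a).map φ = sparsePoly t e (φ ∘ a) := by
  simp [sparsePoly, Polynomial.map_sum]

theorem eval (a : ι → R) (x : R) :
    (sparsePoly t e a).eval x = x ^ t + ∑ i, a i * x ^ (t - e i) := by
  simp [sparsePoly, eval_finsetSum]

theorem degree_sum_lt (he : ∀ i, 0 < e i) (ht : 0 < t) (a : ι → R) :
    (∑ i, C (a i) * X ^ (t - e i)).degree < (t : WithBot ℕ) := by
  refine (degree_sum_le _ _).trans_lt ((Finset.sup_lt_iff (WithBot.bot_lt_coe t)).2 fun i _ => ?_)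
  exact (degree_C_mul_X_pow_le _ _).trans_lt (WithBot.coe_lt_coe.2 (Nat.sub_lt ht (he i)))

theorem monic (he : ∀ i, 0 < e i) (ht : 0 < t) (a : ι → R) : (sparsePoly t e a).Monic :=
  monic_X_pow_add (degree_sum_lt he ht a)

theorem natDegree [Nontrivial R] (he : ∀ i, 0 < e i) (ht : 0 < t) (a : ι → R) :
    (sparsePoly t e a).natDegree = t := by
  refine natDegree_eq_of_degree_eq_some ?_
  rw [sparsePoly, degree_add_eq_left_of_degree_lt] <;> rw [degree_X_pow]
  exact degree_sum_lt he ht a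

theorem monic_sub_C {ι R : Type*} [Fintype ι] [CommRing R] {t : ℕ} {e : ι → ℕ}
    (he : ∀ i, 0 < e i) (ht : 0 < t) (a : ι → R) (v : R) : (sparsePoly t e a - C v).Monic := by
  nontriviality R
  refine (monic he ht a).sub_of_left (degree_C_le.trans_lt ?_)
  rwa [← natDegree_pos_iff_degree_pos, natDegree he ht]

section CriticalPoint

variable {F M ι : Type*} [Field F] [CharZero F] [Field M] [Algebra F M] [Fintype ι] {t : ℕ}
  {e : ι → ℕ} {a : ι → M}

-- `D` is the extension to `M` of the partial derivative with respect to the coefficient `a i`.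
theorem exists_derivation_eval (ha : IsTranscendenceBasis F a) (t : ℕ) (e : ι → ℕ) (i : ι) :
    ∃ D : Derivation F M M, ∀ x,
      D ((sparsePoly t e a).eval x) =
        (derivative (sparsePoly t e a)).eval x * D x + x ^ (t - e i) ∧
      D ((derivative (sparsePoly t e a)).eval x) =
        (derivative (derivative (sparsePoly t e a))).eval x * D x +
          (t - e i : ℕ) * x ^ (t - e i - 1) := by
  classical
  obtain ⟨D, hD⟩ := exists_derivation_apply_eq_of_isTranscendenceBasis ha (Pi.single i 1)
  refine ⟨D, fun x => ⟨?_, ?_⟩⟩ <;>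
  simp [sparsePoly, hD, Pi.single_apply, Derivation.leibniz_pow, Finset.sum_add_distrib,
    Finset.sum_mul, add_mul, mul_assoc, add_assoc, derivative_X_pow, eval_finsetSum]

theorem eval_derivative_ne_zero (ha : IsTranscendenceBasis F a) {l : ι} (hl : e l = t) {x : M}
    (hx : (sparsePoly t e a).eval x = 0) : (derivative (sparsePoly t e a)).eval x ≠ 0 := by
  obtain ⟨D, hD⟩ := exists_derivation_eval ha t e l
  intro h
  simpa [hx, h, hl] using (hD x).1

theorem eq_of_eval_eq_of_eval_derivative_eq_zero (ha : IsTranscendenceBasis F a)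
    (het : ∀ i, e i ≤ t) (ht : t ≠ 0) (hgcd : Finset.univ.gcd e = 1) {x y : M}
    (hx : (derivative (sparsePoly t e a)).eval x = 0)
    (hy : (derivative (sparsePoly t e a)).eval y = 0)
    (hxy : (sparsePoly t e a).eval x = (sparsePoly t e a).eval y) : x = y := by
  have h (i : ι) : x ^ (t - e i) = y ^ (t - e i) := by
    obtain ⟨D, hD⟩ := exists_derivation_eval ha t e i
    have h := (hD x).1
    rw [hxy, (hD y).1, hx, hy, zero_mul, zero_mul, zero_add, zero_add] at h
    exact h.symm
  refine eq_of_pow_eq_pow_of_gcd_eq_one (fun i _ => het i) ht hgcd ?_ fun i _ => h i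
  simpa [sparsePoly.eval, h] using hxy

theorem eval_derivative_derivative_ne_zero (ha : IsTranscendenceBasis F a) {s : ι} (hs : e s < t)
    {x : M} (hx : (derivative (sparsePoly t e a)).eval x = 0) (hx0 : x ≠ 0) :
    (derivative (derivative (sparsePoly t e a))).eval x ≠ 0 := by
  have : CharZero M := charZero_of_injective_algebraMap (algebraMap F M).injective
  obtain ⟨D, hD⟩ := exists_derivation_eval ha t e s
  intro h
  simpa [hx, h, Nat.sub_eq_zero_iff_le, hx0, hs.not_ge] using (hD x).2

theorem exists_ne_zero_eval_derivative_eq_zero [IsAlgClosed M] (ha : IsTranscendenceBasis F a)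
    (he : ∀ i, 0 < e i) {s : ι} (hs : e s < t) :
    ∃ β, β ≠ 0 ∧ (derivative (sparsePoly t e a)).eval β = 0 := by
  have : CharZero M := charZero_of_injective_algebraMap (algebraMap F M).injective
  have ht : 0 < t := (he s).trans hs
  by_contra! h
  set p := derivative (sparsePoly t e a) with hp
  have hlead : p.leadingCoeff = t := by
    rw [hp, leadingCoeff_derivative, monic he ht, natDegree he ht, one_mul]
  have hroots : p.roots = Multiset.replicate (t - 1) 0 := by
    refine Multiset.eq_replicate.2 ⟨?_, fun x hx => by_contra fun hx0 =>
      h x hx0 (isRoot_of_mem_roots hx)⟩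
    rw [← (IsAlgClosed.splits p).natDegree_eq_card_roots, hp, natDegree_derivative, natDegree he ht]
  have hpX : p = C (t : M) * X ^ (t - 1) := by
    simpa [hlead, hroots] using (IsAlgClosed.splits p).eq_prod_roots
  obtain ⟨D, hD⟩ := exists_derivation_eval ha t e s
  have h1 : (0 : M) = (t - e s : ℕ) := by simpa [← hp, hpX] using (hD 1).2
  exact Nat.sub_ne_zero_of_lt hs (Nat.cast_eq_zero.1 h1.symm)

end CriticalPoint

theorem exists_sq_dvd_sub_C {F M ι : Type*} [Field F] [CharZero F] [Field M] [IsAlgClosed M]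
    [DecidableEq M] [Algebra F M] [Fintype ι] {t : ℕ} {e : ι → ℕ} {a : ι → M}
    (ha : IsTranscendenceBasis F a) (he : ∀ i, 0 < e i) (het : ∀ i, e i ≤ t)
    (hgcd : Finset.univ.gcd e = 1) {s : ι} (hs : e s < t) :
    ∃ v β : M, (X - C β) ^ 2 ∣ sparsePoly t e a - C v ∧
      t ≤ (sparsePoly t e a - C v).roots.toFinset.card + 1 := by
  have ht : 0 < t := (he s).trans hs
  obtain ⟨β, hβ0, hβ⟩ := exists_ne_zero_eval_derivative_eq_zero ha he hs
  refine ⟨(sparsePoly t e a).eval β, β, sq_X_sub_C_dvd_sub_C hβ, ?_⟩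
  calc t = (sparsePoly t e a - C ((sparsePoly t e a).eval β)).roots.card := by
        rw [← (IsAlgClosed.splits _).natDegree_eq_card_roots, natDegree_sub_C, natDegree he ht]
    _ ≤ _ := card_roots_le_card_toFinset_roots_add_one (β := β) ?_ fun x hx hx' => ?_
  · simpa using eval_derivative_derivative_ne_zero ha hs hβ hβ0
  · rw [eval_sub, eval_C, sub_eq_zero] at hx
    exact eq_of_eval_eq_of_eval_derivative_eq_zero ha het ht.ne' hgcd (by simpa using hx') hβ hx

section TwoRoots

variable {M ι : Type*} [Field M] [Fintype ι] {t : ℕ} {e : ι → ℕ} {a b : ι → M} {l s : ι} {x y : M}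

theorem coeff_mul_sub_eq_of_eval_eq_zero [DecidableEq ι] (s : ι)
    (hx : (sparsePoly t e a).eval x = 0) (hy : (sparsePoly t e a).eval y = 0) :
    a s * (x ^ (t - e s) - y ^ (t - e s)) =
      y ^ t - x ^ t + ∑ i ∈ Finset.univ.erase s, a i * (y ^ (t - e i) - x ^ (t - e i)) := by
  rw [eval, ← Finset.add_sum_erase _ _ (Finset.mem_univ s)] at hx hy
  simp only [mul_sub, Finset.sum_sub_distrib]
  linear_combination hx - hy

theorem coeff_eq_of_eval_eq_zero [DecidableEq ι] (hl : e l = t)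
    (hx : (sparsePoly t e a).eval x = 0) :
    a l = -(x ^ t + ∑ i ∈ Finset.univ.erase l, a i * x ^ (t - e i)) := by
  rw [eval, ← Finset.add_sum_erase _ _ (Finset.mem_univ l), hl, Nat.sub_self,
    pow_zero] at hx
  linear_combination hx

theorem coeff_mem_of_eval_eq_zero (T : Subfield M) (hl : e l = t)
    (hxy : x ^ (t - e s) ≠ y ^ (t - e s)) (hx : (sparsePoly t e a).eval x = 0)
    (hy : (sparsePoly t e a).eval y = 0) (hxT : x ∈ T) (hyT : y ∈ T)
    (haT : ∀ i, i ≠ s → i ≠ l → a i ∈ T) (i : ι) : a i ∈ T := by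
  classical
  have hs : a s ∈ T := by
    rw [eq_div_of_mul_eq (sub_ne_zero.2 hxy) (coeff_mul_sub_eq_of_eval_eq_zero s hx hy)]
    refine div_mem (add_mem (sub_mem (pow_mem hyT _) (pow_mem hxT _)) (sum_mem fun i hi => ?_))
      (sub_mem (pow_mem hxT _) (pow_mem hyT _))
    rcases eq_or_ne i l with rfl | hil
    · simp [hl]
    · exact mul_mem (haT i (Finset.ne_of_mem_erase hi) hil)
        (sub_mem (pow_mem hyT _) (pow_mem hxT _))
  have hne (j : ι) (hj : j ≠ l) : a j ∈ T := by
    rcases eq_or_ne j s with rfl | hjs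
    exacts [hs, haT j hjs hj]
  rcases eq_or_ne i l with rfl | hil
  · rw [coeff_eq_of_eval_eq_zero hl hx]
    exact neg_mem (add_mem (pow_mem hxT _) (sum_mem fun j hj =>
      mul_mem (hne j (Finset.ne_of_mem_erase hj)) (pow_mem hxT _)))
  · exact hne i hil

theorem coeff_eq_coeff_of_eval_eq_zero (hl : e l = t) (hxy : x ^ (t - e s) ≠ y ^ (t - e s))
    (hx : (sparsePoly t e a).eval x = 0) (hy : (sparsePoly t e a).eval y = 0)
    (hx' : (sparsePoly t e b).eval x = 0) (hy' : (sparsePoly t e b).eval y = 0)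
    (hab : ∀ i, i ≠ s → i ≠ l → a i = b i) : a = b := by
  classical
  have hs : a s = b s := by
    refine mul_right_cancel₀ (sub_ne_zero.2 hxy) ?_
    rw [coeff_mul_sub_eq_of_eval_eq_zero s hx hy, coeff_mul_sub_eq_of_eval_eq_zero s hx' hy']
    congr! 2 with i hi
    rcases eq_or_ne i l with rfl | hil
    · simp [hl]
    · rw [hab i (Finset.ne_of_mem_erase hi) hil]
  have hne (j : ι) (hj : j ≠ l) : a j = b j := by
    rcases eq_or_ne j s with rfl | hjs
    exacts [hs, hab j hjs hj]
  funext i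
  rcases eq_or_ne i l with rfl | hil
  · rw [coeff_eq_of_eval_eq_zero hl hx, coeff_eq_of_eval_eq_zero hl hx']
    congr! 3 with j hj
    rw [hne j (Finset.ne_of_mem_erase hj)]
  · exact hne i hil

theorem exists_pow_ne_pow_of_eval_eq_zero (het : ∀ i, e i ≤ t) (ht : t ≠ 0)
    (hgcd : Finset.univ.gcd e = 1) (hx : (sparsePoly t e a).eval x = 0)
    (hy : (sparsePoly t e a).eval y = 0) (hxy : x ≠ y) :
    ∃ s, x ^ (t - e s) ≠ y ^ (t - e s) := by
  by_contra! h
  refine hxy (eq_of_pow_eq_pow_of_gcd_eq_one (fun i _ => het i) ht hgcd ?_ fun i _ => h i)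
  simpa [eval, h] using hx.trans hy.symm

end TwoRoots

section DoublyTransitive

variable {F M ι : Type*} [Field F] [Field M] [Algebra F M] [Fintype ι] {t : ℕ} {e : ι → ℕ}
  {a : ι → M} {l s : ι} {x y x' y' : M}

theorem isTranscendenceBasis_update_update [DecidableEq ι] (ha : IsTranscendenceBasis F a)
    (hl : e l = t) (hxy : x ^ (t - e s) ≠ y ^ (t - e s)) (hx : (sparsePoly t e a).eval x = 0)
    (hy : (sparsePoly t e a).eval y = 0) :
    IsTranscendenceBasis F (Function.update (Function.update a l x) s y) := by
  set w := Function.update (Function.update a l x) s y with hw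
  have hsl : s ≠ l := by
    rintro rfl
    simp [hl] at hxy
  let E := IntermediateField.adjoin F (Set.range w)
  let T : Subfield M := (algebraicClosure E M).toSubfield
  have hT {z : M} : z ∈ T ↔ IsAlgebraic E z := mem_algebraicClosure_iff
  have hwT (i : ι) : w i ∈ T := hT.2 <|
    isAlgebraic_algebraMap (⟨w i, IntermediateField.subset_adjoin F _ ⟨i, rfl⟩⟩ : E)
  refine isTranscendenceBasis_of_forall_isAlgebraic ha fun i =>
    IntermediateField.isAlgebraic_adjoin_iff.1 <| hT.1 <|
      coeff_mem_of_eval_eq_zero T hl hxy hx hy ?_ ?_ ?_ i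
  · simpa [hw, hsl.symm] using hwT l
  · simpa [hw] using hwT s
  · intro i his hil
    simpa [hw, his, hil] using hwT i

theorem exists_algEquiv_apply_eq_of_pow_ne_pow [IsAlgClosed M] (ha : IsTranscendenceBasis F a)
    (hl : e l = t) (hxy : x ^ (t - e s) ≠ y ^ (t - e s))
    (hxy' : x' ^ (t - e s) ≠ y' ^ (t - e s))
    (hx : (sparsePoly t e a).eval x = 0) (hy : (sparsePoly t e a).eval y = 0)
    (hx' : (sparsePoly t e a).eval x' = 0) (hy' : (sparsePoly t e a).eval y' = 0) :
    ∃ σ : M ≃ₐ[F] M, (∀ i, σ (a i) = a i) ∧ σ x = x' ∧ σ y = y' := by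
  classical
  obtain ⟨σ, hσ⟩ := exists_algEquiv_apply_eq_of_isTranscendenceBasis
    (isTranscendenceBasis_update_update ha hl hxy hx hy)
    (isTranscendenceBasis_update_update ha hl hxy' hx' hy')
  have hsl : s ≠ l := by
    rintro rfl
    simp [hl] at hxy
  have hσx : σ x = x' := by simpa [hsl.symm] using hσ l
  have hσy : σ y = y' := by simpa using hσ s
  have hroot {z : M} (hz : (sparsePoly t e a).eval z = 0) :
      (sparsePoly t e (σ ∘ a)).eval (σ z) = 0 := by
    simpa [eval] using congrArg σ hz
  have hσa : σ ∘ a = a := coeff_eq_coeff_of_eval_eq_zero hl hxy' (hσx ▸ hroot hx) (hσy ▸ hroot hy)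
    hx' hy' fun i his hil => by simpa [his, hil] using hσ i
  exact ⟨σ, congrFun hσa, hσx, hσy⟩

theorem exists_algEquiv_apply_eq_of_eval_eq_zero [IsAlgClosed M] (ha : IsTranscendenceBasis F a)
    (het : ∀ i, e i ≤ t) (hgcd : Finset.univ.gcd e = 1) (hl : e l = t) (ht : t ≠ 0)
    (hxy : x ≠ y) (hxy' : x' ≠ y') (hx : (sparsePoly t e a).eval x = 0)
    (hy : (sparsePoly t e a).eval y = 0)
    (hx' : (sparsePoly t e a).eval x' = 0) (hy' : (sparsePoly t e a).eval y' = 0) :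
    ∃ σ : M ≃ₐ[F] M, (∀ i, σ (a i) = a i) ∧ σ x = x' ∧ σ y = y' := by
  classical
  have hpow {x y : M} (hx : (sparsePoly t e a).eval x = 0) (hy : (sparsePoly t e a).eval y = 0)
      (hxy : x ≠ y) {n : ℕ} (hn : n ≠ 0) : x ^ n ≠ y ^ n := by
    obtain ⟨s, hs⟩ := exists_pow_ne_pow_of_eval_eq_zero het ht hgcd hx hy hxy
    have hsl : s ≠ l := by
      rintro rfl
      simp [hl] at hs
    simpa [hsl.symm] using pow_ne_pow_of_algebraicIndependent
      (isTranscendenceBasis_update_update ha hl hs hx hy).1 hsl.symm hn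
  obtain ⟨s, hs⟩ := exists_pow_ne_pow_of_eval_eq_zero het ht hgcd hx hy hxy
  have hn : t - e s ≠ 0 := fun h => by simp [h] at hs
  exact exists_algEquiv_apply_eq_of_pow_ne_pow ha hl hs (hpow hx' hy' hxy' hn) hx hy hx' hy'

end DoublyTransitive

end sparsePoly

theorem pencil_sparsePoly_sub_C {ι R : Type*} [Fintype ι] [DecidableEq ι] [CommRing R] {t : ℕ}
    {e : ι → ℕ} {l : ι} (hl : e l = t) (a : ι → R) (v : R) :
    pencil (sparsePoly t e a - C v) = sparsePoly t e (C ∘ a + Pi.single l (X - C v)) := by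
  simp [pencil, sparsePoly, Polynomial.map_sum, add_mul, Finset.sum_add_distrib, hl,
    Pi.single_apply, apply_ite C, ite_mul]
  ring

namespace sparsePoly

section GaloisGroup

variable {F K ι : Type*} [Field F] [Field K] [Algebra F K] [Fintype ι] {a : ι → K} {t : ℕ}
  {e : ι → ℕ} {l s : ι} (M : Type*) [Field M] [Algebra K M] [IsAlgClosed M]
  [Algebra.IsAlgebraic K M]

theorem isMultiplyPretransitive_gal (ha : AlgebraicIndependent F a)
    (hK : IntermediateField.adjoin F (Set.range a) = ⊤) (het : ∀ i, e i ≤ t)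
    (hgcd : Finset.univ.gcd e = 1) (hl : e l = t) (ht : t ≠ 0)
    [Fact ((sparsePoly t e a).map (algebraMap K M)).Splits] :
    MulAction.IsMultiplyPretransitive (sparsePoly t e a).Gal ((sparsePoly t e a).rootSet M) 2 := by
  let : Algebra F M := ((algebraMap K M).comp (algebraMap F K)).toAlgebra
  have : IsScalarTower F K M := .of_algebraMap_eq' rfl
  refine MulAction.is_two_pretransitive_iff.2 fun {x y x' y'} hxy hxy' => ?_
  have hroot (z : (sparsePoly t e a).rootSet M) :
      (sparsePoly t e (algebraMap K M ∘ a)).eval z.1 = 0 := by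
    rw [← map, eval_map_algebraMap]
    exact (mem_rootSet'.1 z.2).2
  obtain ⟨σ, hσa, hσx, hσy⟩ := exists_algEquiv_apply_eq_of_eval_eq_zero
    (isTranscendenceBasis_algebraMap_comp_of_adjoin_eq_top ha hK) het hgcd hl ht
    (Subtype.coe_ne_coe.2 hxy) (Subtype.coe_ne_coe.2 hxy') (hroot x) (hroot y) (hroot x') (hroot y')
  have hσ : σ.toAlgHom.comp (IsScalarTower.toAlgHom F K M) = IsScalarTower.toAlgHom F K M :=
    algHom_ext_of_intermediateField_adjoin_eq_top hK (Set.forall_mem_range.2 hσa)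
  let τ : Gal(M/K) := { σ with commutes' := fun r => congr($hσ r) }
  exact ⟨Gal.restrict _ M τ, Subtype.ext ((Gal.restrict_smul τ x).trans hσx),
    Subtype.ext ((Gal.restrict_smul τ y).trans hσy)⟩

variable [CharZero F]

theorem exists_isSwap_toPermHom_gal (ha : AlgebraicIndependent F a)
    (hK : IntermediateField.adjoin F (Set.range a) = ⊤) (he : ∀ i, 0 < e i) (het : ∀ i, e i ≤ t)
    (hgcd : Finset.univ.gcd e = 1) (hl : e l = t) (hs : e s < t)
    [Fact ((sparsePoly t e a).map (algebraMap K M)).Splits]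
    [DecidableEq ((sparsePoly t e a).rootSet M)] :
    ∃ τ : (sparsePoly t e a).Gal,
      (MulAction.toPermHom _ ((sparsePoly t e a).rootSet M) τ).IsSwap := by
  classical
  let : Algebra F M := ((algebraMap K M).comp (algebraMap F K)).toAlgebra
  have : IsScalarTower F K M := .of_algebraMap_eq' rfl
  have : CharZero M := charZero_of_injective_algebraMap (algebraMap F M).injective
  have ht : 0 < t := (he s).trans hs
  have hb := isTranscendenceBasis_algebraMap_comp_of_adjoin_eq_top (M := M) ha hK
  obtain ⟨v, β, hβ, hcard⟩ := exists_sq_dvd_sub_C hb he het hgcd hs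
  set h := sparsePoly t e (algebraMap K M ∘ a) - C v with hh
  have hm : h.Monic := monic_sub_C he ht _ v
  have hdeg : h.natDegree = t := by rw [natDegree_sub_C, natDegree he ht]
  let N := FractionRing M[X]
  obtain ⟨φ, hφ⟩ := exists_algHom_apply_eq_of_algebraicIndependent ha hK <|
    (algebraicIndependent_C_comp_add_single hb.1 l v).map' (f := IsScalarTower.toAlgHom F M[X] N)
      (IsFractionRing.injective M[X] N)
  have hfg : (sparsePoly t e a).map (φ : K →+* N) = (pencil h).map (algebraMap M[X] N) := by
    rw [hh, pencil_sparsePoly_sub_C hl, map, map]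
    exact congrArg _ (funext hφ)
  let L := ((pencil h).map (algebraMap M[X] N)).SplittingField
  obtain ⟨σ, hσ⟩ := pencil.exists_isSwap_toPermHom_rootSet (N := N) (L := L) hm hβ
    (hdeg.trans_le hcard)
  exact exists_isSwap_toPermHom_gal_of_map_eq (φ : K →+* N) hfg (pencil.monic hm (hdeg ▸ ht)) hσ

theorem card_rootSet (ha : AlgebraicIndependent F a)
    (hK : IntermediateField.adjoin F (Set.range a) = ⊤) (he : ∀ i, 0 < e i) (hl : e l = t) :
    Fintype.card ((sparsePoly t e a).rootSet M) = t := by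
  let : Algebra F M := ((algebraMap K M).comp (algebraMap F K)).toAlgebra
  have : IsScalarTower F K M := .of_algebraMap_eq' rfl
  have hb := isTranscendenceBasis_algebraMap_comp_of_adjoin_eq_top (M := M) ha hK
  refine (card_rootSet_eq_natDegree ?_ (IsAlgClosed.splits _)).trans (natDegree he (hl ▸ he l) a)
  rw [← separable_map (algebraMap K M), map]
  refine (isCoprime_iff_aeval_ne_zero_of_isAlgClosed M M _ _).2 fun x => ?_
  rw [coe_aeval_eq_eval, or_iff_not_imp_left, not_not]
  exact eval_derivative_ne_zero hb hl

theorem galActionHom_bijective (ha : AlgebraicIndependent F a)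
    (hK : IntermediateField.adjoin F (Set.range a) = ⊤) (he : ∀ i, 0 < e i) (het : ∀ i, e i ≤ t)
    (hgcd : Finset.univ.gcd e = 1) (hl : e l = t)
    [Fact ((sparsePoly t e a).map (algebraMap K M)).Splits] :
    Function.Bijective (Gal.galActionHom (sparsePoly t e a) M) := by
  classical
  refine ⟨Gal.galActionHom_injective _ M, ?_⟩
  by_cases hs : ∃ s, e s < t
  · obtain ⟨s, hs⟩ := hs
    have h2 := isMultiplyPretransitive_gal M ha hK het hgcd hl ((he s).trans hs).ne'
    have := MulAction.isPreprimitive_of_is_two_pretransitive h2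
    obtain ⟨τ, hτ⟩ := exists_isSwap_toPermHom_gal M ha hK he het hgcd hl hs
    exact toPermHom_surjective_of_isSwap hτ
  · push Not at hs
    have ht : t = 1 := Nat.dvd_one.1 <| hgcd ▸ Finset.dvd_gcd fun i _ =>
      (hs i).antisymm (het i) ▸ dvd_rfl
    have : Subsingleton ((sparsePoly t e a).rootSet M) :=
      Fintype.card_le_one_iff_subsingleton.1 ((card_rootSet M ha hK he hl).trans ht).le
    exact fun g => ⟨1, Subsingleton.elim _ _⟩

end GaloisGroup

end sparsePoly

theorem stmt8_general {F K ι : Type*} [Field F] [CharZero F] [Field K] [Algebra F K] [Fintype ι]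
    {a : ι → K} (ha : AlgebraicIndependent F a)
    (hK : IntermediateField.adjoin F (Set.range a) = ⊤) {t : ℕ} {e : ι → ℕ} (he : ∀ i, 0 < e i)
    (het : ∀ i, e i ≤ t) (hgcd : Finset.univ.gcd e = 1) {l : ι} (hl : e l = t) :
    Nonempty ((sparsePoly t e a).Gal ≃* Equiv.Perm (Fin t)) := by
  let M := AlgebraicClosure K
  have : Fact ((sparsePoly t e a).map (algebraMap K M)).Splits := ⟨IsAlgClosed.splits _⟩
  exact ⟨(MulEquiv.ofBijective _ (sparsePoly.galActionHom_bijective M ha hK he het hgcd hl)).trans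
    (Fintype.equivFinOfCardEq (sparsePoly.card_rootSet M ha hK he hl)).permCongrHom⟩

end

theorem stmt8 (F : Type*) [Field F] [CharZero F] (k t : ℕ) (hk : 2 ≤ k)
    (tv : Fin k → ℕ) (h1 : 1 ≤ tv ⟨0, by omega⟩) (hmono : Monotone tv)
    (hlast : tv ⟨k - 1, by omega⟩ = t)
    (hgcd : Finset.univ.gcd tv = 1) :
    Nonempty
      ((Polynomial.X ^ t + ∑ i : Fin k,
          Polynomial.C (algebraMap (MvPolynomial (Fin k) F)
            (FractionRing (MvPolynomial (Fin k) F)) (MvPolynomial.X i)) *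
            Polynomial.X ^ (t - tv i) :
          Polynomial (FractionRing (MvPolynomial (Fin k) F))).Gal ≃*
        Equiv.Perm (Fin t)) := by
  exact stmt8_general (MvPolynomial.algebraicIndependent_X (Fin k) F |>.map'
      (f := IsScalarTower.toAlgHom F _ _) (IsFractionRing.injective _ _))
    (adjoin_range_algebraMap_X_eq_top F _ (Fin k))
    (fun i => h1.trans (hmono (Fin.mk_le_of_le_val (Nat.zero_le _))))
    (fun i => hlast ▸ hmono (Fin.le_def.2 (Nat.le_sub_one_of_lt i.2))) hgcd hlast
end

section
/- Let k ≥ 1 and t ≥ 1, let 1 ≤ n ≤ t, and let a_0, a_1, …, a_t be independent variables over a field of characteristic 0. Then Σ_{r=0}^{kt} Tr( (∂/∂a_0 Π_{r,t}^{[k]}(a_0,…,a_t)) · (Π_{r,t}^{[k]}(a_0,…,a_t))^{n−1} ) = Σ_{r=0}^{kt} Tr( (∂/∂a_n Π_{r,t}^{[k]}(a_0,…,a_t)) · (Π_{r,t}^{[k]}(a_0,…,a_t))^{n−1} ), where ∂/∂a_i acts entrywise on the matrix. -/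
open scoped BigOperators Classical

/-- The index set `G_{r,t}^{[k]}`: vectors `(l_1, …, l_t)` with `0 ≤ l_i ≤ k` and
`l_1 + ⋯ + l_t = r`. -/
def GIdx (k r t : ℕ) := {l : Fin t → Fin (k + 1) // (∑ i, (l i : ℕ)) = r}

noncomputable instance (k r t : ℕ) : Fintype (GIdx k r t) := by
  unfold GIdx; infer_instance

instance (k r t : ℕ) : DecidableEq (GIdx k r t) := by
  unfold GIdx; infer_instance

/-- The square matrix `Π_{r,t}^{[k]}(a_0, a_1, …, a_t)`, with rows and columns indexed by
`G_{r,t}^{[k]}`.  For `t ≥ 1` the `(α,β)` entry, for `α = (l_1, …, l_t)`, equals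
`k!·C(k, l_t+p_1+⋯+p_{t−1})·C(l_1,p_1)⋯C(l_{t−1},p_{t−1})·a_0^{k−l_t−Σp}·a_1^{p_1}⋯a_{t−1}^{p_{t−1}}·a_t^{l_t}`
if `β = (l_t+p_1+⋯+p_{t−1}, l_1−p_1, …, l_{t−1}−p_{t−1})` for (necessarily unique) integers
`0 ≤ p_i ≤ l_i` with `p_1+⋯+p_{t−1} ≤ k−l_t`, and `0` otherwise; `Π_{0,0}^{[k]}(a_0) = k!·a_0^k`. -/
noncomputable def PiMat {R : Type*} [CommRing R] (k t r : ℕ) (a : ℕ → R) :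
    Matrix (GIdx k r t) (GIdx k r t) R :=
  Matrix.of fun α β =>
    if ht : 0 < t then
      ∑ p : Fin t → Fin (k + 1),
        if (∀ i : Fin t, i.val + 1 < t → (p i : ℕ) ≤ (α.1 i : ℕ)) ∧
            (∀ i : Fin t, ¬ i.val + 1 < t → (p i : ℕ) = 0) ∧
            (α.1 ⟨t - 1, Nat.sub_lt ht one_pos⟩ : ℕ) + (∑ i, (p i : ℕ)) ≤ k ∧
            (β.1 ⟨0, ht⟩ : ℕ) = (α.1 ⟨t - 1, Nat.sub_lt ht one_pos⟩ : ℕ) + ∑ i, (p i : ℕ) ∧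
            (∀ j : Fin t, 0 < j.val →
              (β.1 j : ℕ) =
                (α.1 ⟨j.val - 1, lt_of_le_of_lt (Nat.pred_le _) j.isLt⟩ : ℕ) -
                  (p ⟨j.val - 1, lt_of_le_of_lt (Nat.pred_le _) j.isLt⟩ : ℕ)) then
          (Nat.factorial k : R) *
            (Nat.choose k ((α.1 ⟨t - 1, Nat.sub_lt ht one_pos⟩ : ℕ) + ∑ i, (p i : ℕ)) : R) *
            (∏ i : Fin t, if i.val + 1 < t then (Nat.choose (α.1 i : ℕ) (p i : ℕ) : R) else 1) *
            a 0 ^ (k - (α.1 ⟨t - 1, Nat.sub_lt ht one_pos⟩ : ℕ) - ∑ i, (p i : ℕ)) *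
            (∏ i : Fin t, if i.val + 1 < t then a (i.val + 1) ^ (p i : ℕ) else 1) *
            a t ^ (α.1 ⟨t - 1, Nat.sub_lt ht one_pos⟩ : ℕ)
        else 0
    else (Nat.factorial k : R) * a 0 ^ k

/-!
On polynomials in `y_1, …, y_t` of degree at most `k` in each variable, consider the operator
`T f = k!·(a_0 + y_1)^k · f(a_1 + y_2, …, a_{t-1} + y_t, a_t)`. The matrices `Π_{r,t}` are the blocks
of the degree-preserving part of `T` in the monomial basis. By the chain rule
`∂T/∂a_i = T ∘ ∂/∂y_i` for `i ≥ 1`, and as `a_i` enters only through `a_i + y_{i+1}`, also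
`∂T/∂a_i = ∂/∂y_{i+1} ∘ T` for `i < t`. Hence `∂/∂y_{i+1} ∘ T = T ∘ ∂/∂y_i`, and by cyclicity of the
trace `∂/∂y_1` can be carried through `T^{n-1}`, which turns `∂T/∂a_0` into `∂T/∂a_n`.
-/

open Finset

section BinomMonomial

variable {R ι : Type*} [CommSemiring R] [Fintype ι]

/-- The binomial coefficient `C(u, v) = ∏ C(u_i, v_i)` of multi-indices. -/
def piChoose (u v : ι → ℕ) : ℕ :=
  ∏ i, (u i).choose (v i)

/-- The coefficient `C(u, v) x^{u-v}` of `y^v` in `(x + y)^u`, in multi-index notation. It is zero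
unless `v ≤ u`, so the truncated subtraction in the exponent does no harm. -/
def binomMonomial (u v : ι → ℕ) (x : ι → R) : R :=
  (piChoose u v : R) * ∏ i, x i ^ (u - v) i

lemma piChoose_eq_zero_of_lt {u v : ι → ℕ} {i : ι} (h : u i < v i) : piChoose u v = 0 :=
  prod_eq_zero (mem_univ i) (Nat.choose_eq_zero_of_lt h)

lemma binomMonomial_eq_zero_of_lt {u v : ι → ℕ} {i : ι} (h : u i < v i) (x : ι → R) :
    binomMonomial u v x = 0 := by
  rw [binomMonomial, piChoose_eq_zero_of_lt h, Nat.cast_zero, zero_mul]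

lemma mul_prod_eq_mul_prod_of_ne {f g : ι → R} {a b : R} (j : ι) (hj : a * f j = b * g j)
    (h : ∀ i ≠ j, f i = g i) : a * ∏ i, f i = b * ∏ i, g i := by
  classical
  rw [← mul_prod_erase univ f (mem_univ j), ← mul_prod_erase univ g (mem_univ j), ← mul_assoc, hj,
    mul_assoc, prod_congr rfl fun i hi ↦ h i (ne_of_mem_erase hi)]

variable [DecidableEq ι]

lemma mul_piChoose_sub_single (u v : ι → ℕ) (j : ι) :
    u j * piChoose (u - Pi.single j 1) v = (u - v) j * piChoose u v := by
  refine mul_prod_eq_mul_prod_of_ne j ?_ fun i hi ↦ by simp [hi]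
  rw [Pi.sub_apply, Pi.sub_apply, Pi.single_eq_same]
  rcases u j with _ | m
  · simp
  · rw [Nat.add_sub_cancel, mul_comm, Nat.choose_mul_succ_eq, mul_comm]

lemma mul_piChoose_add_single (u v : ι → ℕ) (j : ι) :
    (v j + 1) * piChoose u (v + Pi.single j 1) = (u - v) j * piChoose u v := by
  refine mul_prod_eq_mul_prod_of_ne j ?_ fun i hi ↦ by simp [hi]
  rw [Pi.add_apply, Pi.single_eq_same, mul_comm, Nat.choose_succ_right_eq, mul_comm, Pi.sub_apply]

open MvPolynomial

lemma pderiv_prod_X_pow (e : ι → ℕ) (j : ι) :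
    pderiv j (∏ i, X i ^ e i) =
      (e j : MvPolynomial ι R) * ∏ i, X i ^ (e - Pi.single j 1 : ι → ℕ) i := by
  have prod_X_pow (e : ι → ℕ) : ∏ i, X i ^ e i =
      (monomial (Finsupp.equivFunOnFinite.symm e) 1 : MvPolynomial ι R) := by
    rw [monomial_eq, C_1, one_mul, Finsupp.prod_fintype _ _ fun _ ↦ pow_zero _]
    rfl
  have equiv_sub : Finsupp.equivFunOnFinite.symm (e - Pi.single j 1) =
      Finsupp.equivFunOnFinite.symm e - Finsupp.single j 1 := by
    ext i
    simp [Finsupp.single_apply, Pi.single_apply, eq_comm]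
  rw [prod_X_pow, prod_X_pow, pderiv_monomial, equiv_sub, ← map_natCast C, C_mul_monomial, mul_comm]
  rfl

lemma pderiv_binomMonomial (u v : ι → ℕ) (j : ι) :
    pderiv j (binomMonomial u v X) =
      (((u - v) j * piChoose u v : ℕ) : MvPolynomial ι R) *
        ∏ i, X i ^ (u - v - Pi.single j 1 : ι → ℕ) i := by
  rw [binomMonomial, Derivation.leibniz, Derivation.map_natCast, smul_zero, add_zero, smul_eq_mul,
    pderiv_prod_X_pow, Nat.cast_mul, mul_left_comm, mul_assoc]

lemma pderiv_binomMonomial_eq_sub_single (u v : ι → ℕ) (j : ι) :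
    pderiv j (binomMonomial u v X) =
      (u j : MvPolynomial ι R) * binomMonomial (u - Pi.single j 1) v X := by
  rw [pderiv_binomMonomial, ← mul_piChoose_sub_single, Nat.cast_mul, mul_assoc, tsub_right_comm]
  rfl

lemma pderiv_binomMonomial_eq_add_single (u v : ι → ℕ) (j : ι) :
    pderiv j (binomMonomial u v X) =
      ((v j + 1 : ℕ) : MvPolynomial ι R) * binomMonomial u (v + Pi.single j 1) X := by
  rw [pderiv_binomMonomial, ← mul_piChoose_add_single, Nat.cast_mul, mul_assoc, tsub_tsub]
  rfl

end BinomMonomial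

section FinVectors

variable {k t : ℕ}

lemma cons_sub_single_succ (a : ℕ) (α : Fin t → ℕ) (i : Fin t) (b : ℕ) :
    (Fin.cons a (α - Pi.single i b) : Fin (t + 1) → ℕ) = Fin.cons a α - Pi.single i.succ b := by
  ext j
  cases j using Fin.cases <;> simp [Pi.single_apply]

lemma snoc_add_single_castSucc (a : ℕ) (β : Fin t → ℕ) (i : Fin t) (b : ℕ) :
    (Fin.snoc (β + Pi.single i b) a : Fin (t + 1) → ℕ) =
      Fin.snoc β a + Pi.single i.castSucc b := by
  ext j
  cases j using Fin.lastCases <;> simp [Pi.single_apply]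

lemma sum_add_single (β : Fin t → ℕ) (i : Fin t) (b : ℕ) :
    ∑ j, (β + Pi.single i b : Fin t → ℕ) j = ∑ j, β j + b := by
  simp [sum_add_distrib]

lemma sub_single_add_single {α : Fin t → ℕ} {i : Fin t} {b : ℕ} (h : b ≤ α i) :
    α - Pi.single i b + Pi.single i b = α := by
  refine tsub_add_cancel_of_le fun j ↦ ?_
  rcases eq_or_ne j i with rfl | hj
  · simpa
  · simp [hj]

lemma sum_ite_val_comp_eq {M : Type*} [AddCommMonoid M] (v : Fin t → ℕ) (c : M)
    (hc : ∀ i, k < v i → c = 0) :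
    ∑ γ : Fin t → Fin (k + 1), (if Fin.val ∘ γ = v then c else 0) = c := by
  by_cases hv : ∀ i, v i < k + 1
  · have val_comp_eq_iff (γ : Fin t → Fin (k + 1)) :
        Fin.val ∘ γ = v ↔ γ = fun i ↦ ⟨v i, hv i⟩ := by
      simp [funext_iff, Fin.ext_iff]
    simp [val_comp_eq_iff]
  · push Not at hv
    obtain ⟨i, hi⟩ := hv
    simp [hc i hi]

lemma sum_mem_range_succ (α : Fin t → Fin (k + 1)) :
    ∑ i, (α i : ℕ) ∈ range (k * t + 1) := by
  have sum_le := sum_le_card_nsmul univ (fun i ↦ (α i : ℕ)) k fun i _ ↦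
    Nat.lt_succ_iff.mp (α i).isLt
  rw [card_univ, Fintype.card_fin, smul_eq_mul, mul_comm] at sum_le
  exact mem_range_succ_iff.mpr sum_le

end FinVectors

section Transfer

variable {R : Type*} [CommSemiring R] {t : ℕ}

/-- The coefficient of `y^β` in `k!·(a_0 + y_1)^k·∏ (a_i + y_{i+1})^{α_i}` (with `y_{t+1} = 0`) if
`β` has degree `|α| + d`, and `0` otherwise. The entries of `Π` are those with `d = 0`; the
derivatives of `Π` lead to `d = 1`. -/
def transferCoeff (k : ℕ) (d : ℤ) (a : Fin (t + 1) → R) (α β : Fin t → ℕ) : R :=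
  if ((∑ i, β i : ℕ) : ℤ) = (∑ i, α i : ℕ) + d then
    (k.factorial : R) * binomMonomial (Fin.cons k α : Fin (t + 1) → ℕ) (Fin.snoc β 0) a
  else 0

lemma transferCoeff_eq_zero_of_lt {k : ℕ} {α β : Fin t → ℕ} {i : Fin t} (hα : ∀ j, α j ≤ k)
    (hβ : k < β i) (d : ℤ) (a : Fin (t + 1) → R) : transferCoeff k d a α β = 0 := by
  have cons_le (j : Fin (t + 1)) : (Fin.cons k α : Fin (t + 1) → ℕ) j ≤ k := by
    cases j using Fin.cases <;> simp [hα]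
  have cons_lt_snoc : (Fin.cons k α : Fin (t + 1) → ℕ) i.castSucc <
      (Fin.snoc β 0 : Fin (t + 1) → ℕ) i.castSucc := by
    rw [Fin.snoc_castSucc]
    exact (cons_le _).trans_lt hβ
  rw [transferCoeff, binomMonomial_eq_zero_of_lt cons_lt_snoc, mul_zero, ite_self]

open MvPolynomial

lemma pderiv_transferCoeff (k : ℕ) (d : ℤ) (j : Fin (t + 1)) (α β : Fin t → ℕ) :
    pderiv j (transferCoeff k d X α β : MvPolynomial (Fin (t + 1)) R) =
      if ((∑ i, β i : ℕ) : ℤ) = (∑ i, α i : ℕ) + d then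
        (k.factorial : MvPolynomial (Fin (t + 1)) R) *
          pderiv j (binomMonomial (Fin.cons k α) (Fin.snoc β 0) X)
      else 0 := by
  rw [transferCoeff, apply_ite (pderiv j), map_zero, Derivation.leibniz, Derivation.map_natCast,
    smul_zero, add_zero, smul_eq_mul]

lemma pderiv_succ_transferCoeff (k : ℕ) (d : ℤ) (i : Fin t) (α β : Fin t → ℕ) :
    pderiv i.succ (transferCoeff k d X α β) =
      (α i : MvPolynomial (Fin (t + 1)) R) *
        transferCoeff k (d + 1) X (α - Pi.single i 1) β := by
  rw [pderiv_transferCoeff, pderiv_binomMonomial_eq_sub_single, Fin.cons_succ, transferCoeff,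
    ← cons_sub_single_succ]
  rcases Nat.eq_zero_or_pos (α i) with hα | hα
  · simp [hα]
  · have degree_sub : ∑ j, (α - Pi.single i 1 : Fin t → ℕ) j + 1 = ∑ j, α j := by
      rw [← sum_add_single, sub_single_add_single hα]
    rw [← degree_sub, mul_ite, mul_zero, mul_left_comm]
    refine if_congr ?_ rfl rfl
    omega

lemma pderiv_castSucc_transferCoeff (k : ℕ) (d : ℤ) (i : Fin t) (α β : Fin t → ℕ) :
    pderiv i.castSucc (transferCoeff k d X α β) =
      ((β i + 1 : ℕ) : MvPolynomial (Fin (t + 1)) R) *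
        transferCoeff k (d + 1) X α (β + Pi.single i 1) := by
  rw [pderiv_transferCoeff, pderiv_binomMonomial_eq_add_single, Fin.snoc_castSucc, transferCoeff,
    ← snoc_add_single_castSucc, sum_add_single, mul_ite, mul_zero, mul_left_comm]
  refine if_congr ?_ rfl rfl
  omega

/-- The matrix, in the basis of monomials with exponents at most `k`, of the part of the operator
`f ↦ k!·(a_0 + y_1)^k·f(a_1 + y_2, …, a_{t-1} + y_t, a_t)` that raises degrees by `d`, for
independent variables `a_i`. As for `Π`, the row `α` holds the coefficients of the image of `y^α`,
so a product of matrices applies its left factor first. -/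
noncomputable def transferMat (R : Type*) [CommSemiring R] (k t : ℕ) (d : ℤ) :
    Matrix (Fin t → Fin (k + 1)) (Fin t → Fin (k + 1)) (MvPolynomial (Fin (t + 1)) R) :=
  Matrix.of fun α β ↦ transferCoeff k d X (Fin.val ∘ α) (Fin.val ∘ β)

lemma transferMat_zero_apply_eq_zero {k : ℕ} (α β : Fin t → Fin (k + 1))
    (h : ∑ i, (α i : ℕ) ≠ ∑ i, (β i : ℕ)) : transferMat R k t 0 α β = 0 :=
  if_neg fun h' ↦ h <| by
    rw [add_zero, Nat.cast_inj] at h'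
    exact h'.symm

/-- The matrix of `∂/∂y_i` in the basis of monomials with exponents at most `k`. -/
def derivMat (R : Type*) [CommSemiring R] (k : ℕ) (i : Fin t) :
    Matrix (Fin t → Fin (k + 1)) (Fin t → Fin (k + 1)) R :=
  Matrix.of fun α β ↦ if Fin.val ∘ β = Fin.val ∘ α - Pi.single i 1 then (α i : R) else 0

lemma derivMat_apply_eq_ite_add_single (k : ℕ) (i : Fin t) (γ β : Fin t → Fin (k + 1)) :
    derivMat R k i γ β =
      if Fin.val ∘ γ = Fin.val ∘ β + Pi.single i 1 then ((β i + 1 : ℕ) : R) else 0 := by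
  rw [derivMat, Matrix.of_apply]
  rcases Nat.eq_zero_or_pos (γ i) with hγ | hγ
  · have ne_add_single : Fin.val ∘ γ ≠ Fin.val ∘ β + Pi.single i 1 := fun h ↦ by
      simpa [hγ] using congrFun h i
    rw [if_neg ne_add_single, hγ, Nat.cast_zero, ite_self]
  · have eq_sub_iff : Fin.val ∘ β = Fin.val ∘ γ - Pi.single i 1 ↔
        Fin.val ∘ γ = Fin.val ∘ β + Pi.single i 1 := by
      conv_rhs => rw [← sub_single_add_single (α := Fin.val ∘ γ) hγ, add_left_inj, eq_comm]
    refine ite_congr (propext eq_sub_iff) (fun h ↦ ?_) fun _ ↦ rfl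
    simpa using congrArg (Nat.cast (R := R)) (congrFun h i)

lemma derivMat_mul_transferMat_apply (k : ℕ) (d : ℤ) (i : Fin t) (α β : Fin t → Fin (k + 1)) :
    (derivMat _ k i * transferMat R k t d : Matrix _ _ _) α β =
      (α i : MvPolynomial (Fin (t + 1)) R) *
        transferCoeff k d X (Fin.val ∘ α - Pi.single i 1) (Fin.val ∘ β) := by
  rw [Matrix.mul_apply, ← sum_ite_val_comp_eq (k := k) (Fin.val ∘ α - Pi.single i 1) (_ * _)]
  · refine sum_congr rfl fun γ _ ↦ ?_
    rw [derivMat, transferMat, Matrix.of_apply, Matrix.of_apply, ite_mul, zero_mul]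
    exact ite_congr rfl (fun hγ ↦ by rw [hγ]) fun _ ↦ rfl
  · intro j hj
    exact absurd hj (not_lt_of_ge ((Nat.sub_le _ _).trans (Nat.lt_succ_iff.mp (α j).isLt)))

lemma transferMat_mul_derivMat_apply (k : ℕ) (d : ℤ) (i : Fin t) (α β : Fin t → Fin (k + 1)) :
    (transferMat R k t d * derivMat _ k i : Matrix _ _ _) α β =
      ((β i + 1 : ℕ) : MvPolynomial (Fin (t + 1)) R) *
        transferCoeff k d X (Fin.val ∘ α) (Fin.val ∘ β + Pi.single i 1) := by
  rw [Matrix.mul_apply, ← sum_ite_val_comp_eq (k := k) (Fin.val ∘ β + Pi.single i 1) (_ * _)]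
  · refine sum_congr rfl fun γ _ ↦ ?_
    rw [derivMat_apply_eq_ite_add_single, transferMat, Matrix.of_apply, mul_ite, mul_zero, mul_comm]
    exact ite_congr rfl (fun hγ ↦ by rw [hγ]) fun _ ↦ rfl
  · intro j hj
    have val_le (l : Fin t) : (Fin.val ∘ α) l ≤ k := Nat.lt_succ_iff.mp (α l).isLt
    rw [transferCoeff_eq_zero_of_lt val_le hj, mul_zero]

lemma map_pderiv_succ_transferMat (k : ℕ) (d : ℤ) (i : Fin t) :
    (transferMat R k t d).map (pderiv i.succ) = derivMat _ k i * transferMat R k t (d + 1) := by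
  ext1 α β
  rw [derivMat_mul_transferMat_apply]
  exact pderiv_succ_transferCoeff k d i _ _

lemma map_pderiv_castSucc_transferMat (k : ℕ) (d : ℤ) (i : Fin t) :
    (transferMat R k t d).map (pderiv i.castSucc) = transferMat R k t (d + 1) * derivMat _ k i := by
  ext1 α β
  rw [transferMat_mul_derivMat_apply]
  exact pderiv_castSucc_transferCoeff k d i _ _

lemma derivMat_mul_transferMat (k : ℕ) (d : ℤ) {i j : Fin t} (h : i.succ = j.castSucc) :
    derivMat _ k i * transferMat R k t d = transferMat R k t d * derivMat _ k j := by
  rw [← sub_add_cancel d 1, ← map_pderiv_succ_transferMat, h, map_pderiv_castSucc_transferMat]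

lemma derivMat_zero_mul_transferMat_pow (k : ℕ) (d : ℤ) {s : ℕ} (hs : s < t) :
    derivMat _ k ⟨0, s.zero_le.trans_lt hs⟩ * transferMat R k t d ^ s =
      transferMat R k t d ^ s * derivMat _ k ⟨s, hs⟩ := by
  induction s with
  | zero => rw [pow_zero, mul_one, one_mul]
  | succ s ih =>
    rw [pow_succ, ← mul_assoc, ih (Nat.lt_of_succ_lt hs), mul_assoc, mul_assoc,
      derivMat_mul_transferMat k d (j := ⟨s + 1, hs⟩) rfl]

lemma trace_map_pderiv_zero_mul_transferMat_pow (k : ℕ) (d : ℤ) (s : Fin t) :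
    ((transferMat R k t d).map (pderiv 0) * transferMat R k t d ^ (s : ℕ)).trace =
      ((transferMat R k t d).map (pderiv s.succ) * transferMat R k t d ^ (s : ℕ)).trace := by
  rw [show (0 : Fin (t + 1)) = Fin.castSucc ⟨0, s.pos⟩ from rfl, map_pderiv_castSucc_transferMat,
    map_pderiv_succ_transferMat, mul_assoc, derivMat_zero_mul_transferMat_pow k d s.isLt,
    ← mul_assoc, Matrix.trace_mul_comm, mul_assoc]

end Transfer

section Blocks

open Matrix Function

variable {R n : Type*} [CommSemiring R] [Fintype n]

section Injective

variable {m : Type*} [Fintype m] {f : m → n} {M : Matrix n n R}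

lemma submatrix_mul_of_injective (hf : Injective f) (hM : ∀ i, ∀ j ∉ Set.range f, M (f i) j = 0)
    (N : Matrix n n R) : (M * N).submatrix f f = M.submatrix f f * N.submatrix f f := by
  ext i j
  refine (Fintype.sum_of_injective f hf _ _ (fun l hl ↦ ?_) fun l ↦ rfl).symm
  exact mul_eq_zero_of_left (hM i l hl) _

lemma submatrix_pow_of_injective [DecidableEq m] [DecidableEq n] (hf : Injective f)
    (hM : ∀ i, ∀ j ∉ Set.range f, M (f i) j = 0) (s : ℕ) :
    (M ^ s).submatrix f f = M.submatrix f f ^ s := by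
  induction s with
  | zero => rw [pow_zero, pow_zero, submatrix_one f hf]
  | succ s ih => rw [pow_succ', pow_succ', submatrix_mul_of_injective hf hM, ih]

end Injective

variable {ι : Type*} {p : ι → Type*} [∀ a, Fintype (p a)] {b : n → ι} {f : ∀ a, p a → n}

lemma sum_trace_submatrix (hf : ∀ a, Injective (f a)) (hb : ∀ a, Set.range (f a) = b ⁻¹' {a})
    {S : Finset ι} (hS : ∀ i, b i ∈ S) (M : Matrix n n R) :
    ∑ a ∈ S, (M.submatrix (f a) (f a)).trace = M.trace := by
  classical
  have b_apply (a : ι) (i : p a) : b (f a i) = a := (hb a).le (Set.mem_range_self i)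
  have trace_submatrix (a : ι) :
      (M.submatrix (f a) (f a)).trace = ∑ i with b i = a, M i i := by
    rw [sum_filter]
    refine Fintype.sum_of_injective (f a) (hf a) _ _ (fun i hi ↦ if_neg ?_) fun i ↦ ?_
    · rwa [hb] at hi
    · rw [if_pos (b_apply a i), Matrix.diag_apply, submatrix_apply]
  simp only [trace_submatrix]
  exact sum_fiberwise_of_maps_to (fun i _ ↦ hS i) _

lemma sum_trace_submatrix_mul_pow [DecidableEq n] [∀ a, DecidableEq (p a)]
    (hf : ∀ a, Injective (f a)) (hb : ∀ a, Set.range (f a) = b ⁻¹' {a})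
    {S : Finset ι} (hS : ∀ i, b i ∈ S) {M N : Matrix n n R} (hM : ∀ i j, b i ≠ b j → M i j = 0)
    (hN : ∀ i j, b i ≠ b j → N i j = 0) (s : ℕ) :
    ∑ a ∈ S, (N.submatrix (f a) (f a) * M.submatrix (f a) (f a) ^ s).trace =
      (N * M ^ s).trace := by
  have ne_of_notMem (a : ι) (i : p a) (j : n) (hj : j ∉ Set.range (f a)) : b (f a i) ≠ b j := by
    rw [hb] at hj
    rw [show b (f a i) = a from (hb a).le (Set.mem_range_self i)]
    exact Ne.symm hj
  rw [← sum_trace_submatrix hf hb hS]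
  refine sum_congr rfl fun a _ ↦ ?_
  rw [submatrix_mul_of_injective (hf a) fun i j hj ↦ hN _ _ (ne_of_notMem a i j hj),
    submatrix_pow_of_injective (hf a) fun i j hj ↦ hM _ _ (ne_of_notMem a i j hj)]

end Blocks

section PiMat

variable {k m : ℕ} {α β : Fin (m + 1) → ℕ}

lemma zero_eq_last_add_sum_of_le (h : ∑ i, β i = ∑ i, α i)
    (hle : ∀ i : Fin m, β i.succ ≤ α i.castSucc) {p : Fin (m + 1) → ℕ}
    (hp : p = Fin.snoc (fun i : Fin m ↦ α i.castSucc - β i.succ) 0) :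
    β 0 = α (Fin.last m) + ∑ i, p i := by
  have sum_sub_add : ∑ i : Fin m, (α i.castSucc - β i.succ) + ∑ i : Fin m, β i.succ =
      ∑ i : Fin m, α i.castSucc := by
    rw [← sum_add_distrib]
    exact sum_congr rfl fun i _ ↦ Nat.sub_add_cancel (hle i)
  simp only [hp, Fin.sum_univ_castSucc (Fin.snoc _ _), Fin.snoc_castSucc, Fin.snoc_last]
  rw [Fin.sum_univ_succ, Fin.sum_univ_castSucc] at h
  omega

lemma prod_castSucc_ite {M : Type*} [CommMonoid M] (f : Fin (m + 1) → M) :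
    ∏ i : Fin (m + 1), (if i.val + 1 < m + 1 then f i else 1) = ∏ i : Fin m, f i.castSucc := by
  simp [Fin.prod_univ_castSucc]

lemma binomMonomial_cons_snoc_of_le {R : Type*} [CommSemiring R] (k : ℕ)
    (hle : ∀ i : Fin m, β i.succ ≤ α i.castSucc) (a : ℕ → R) :
    binomMonomial (Fin.cons k α : Fin (m + 2) → ℕ) (Fin.snoc β 0) (fun i ↦ a i) =
      (k.choose (β 0) : R) *
        (∏ i : Fin m, ((α i.castSucc).choose (α i.castSucc - β i.succ) : R)) * a 0 ^ (k - β 0) *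
        (∏ i : Fin m, a (i + 1) ^ (α i.castSucc - β i.succ)) * a (m + 1) ^ α (Fin.last m) := by
  have snoc_zero : (Fin.snoc β 0 : Fin (m + 2) → ℕ) 0 = β 0 :=
    Fin.snoc_castSucc (i := 0) ..
  have snoc_succ (i : Fin m) : (Fin.snoc β 0 : Fin (m + 2) → ℕ) i.castSucc.succ = β i.succ := by
    rw [Fin.succ_castSucc, Fin.snoc_castSucc]
  have snoc_last : (Fin.snoc β 0 : Fin (m + 2) → ℕ) (Fin.last m).succ = 0 := Fin.snoc_last ..
  simp only [binomMonomial, piChoose, Pi.sub_apply, Fin.prod_univ_succ (n := m + 1),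
    Fin.prod_univ_castSucc (n := m), Fin.cons_zero, Fin.cons_succ, snoc_zero, snoc_succ, snoc_last]
  simp [Nat.choose_symm (hle _), mul_assoc, mul_left_comm]

lemma piMat_condition_iff_eq_snoc (h : ∑ i, β i = ∑ i, α i)
    (hle : ∀ i : Fin m, β i.succ ≤ α i.castSucc) (hβ : β 0 ≤ k) (p : Fin (m + 1) → ℕ) :
    ((∀ i : Fin (m + 1), i.val + 1 < m + 1 → p i ≤ α i) ∧
      (∀ i : Fin (m + 1), ¬ i.val + 1 < m + 1 → p i = 0) ∧
      α (Fin.last m) + ∑ i, p i ≤ k ∧ β 0 = α (Fin.last m) + ∑ i, p i ∧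
      ∀ j : Fin (m + 1), 0 < j.val →
        β j = α ⟨j.val - 1, lt_of_le_of_lt (Nat.pred_le _) j.isLt⟩ -
          p ⟨j.val - 1, lt_of_le_of_lt (Nat.pred_le _) j.isLt⟩) ↔
      p = Fin.snoc (fun i : Fin m ↦ α i.castSucc - β i.succ) 0 := by
  constructor
  · rintro ⟨p_le, p_last, -, -, β_eq⟩
    ext i
    cases i using Fin.lastCases with
    | last => rw [Fin.snoc_last, p_last _ (by simp)]
    | cast i =>
      have β_succ : β i.succ = α i.castSucc - p i.castSucc := β_eq i.succ i.succ_pos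
      rw [Fin.snoc_castSucc, β_succ, Nat.sub_sub_self (p_le _ (by simp))]
  · intro hp
    have p_castSucc (i : Fin m) : p i.castSucc = α i.castSucc - β i.succ := by simp [hp]
    have β_zero := zero_eq_last_add_sum_of_le h hle hp
    refine ⟨fun i hi ↦ ?_, fun i hi ↦ ?_, β_zero ▸ hβ, β_zero, fun j hj ↦ ?_⟩
    · cases i using Fin.lastCases with
      | last => simp at hi
      | cast i => exact (p_castSucc i).trans_le (Nat.sub_le _ _)
    · cases i using Fin.lastCases with
      | last => simp [hp]
      | cast i => simp at hi
    · cases j using Fin.cases with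
      | zero => simp at hj
      | succ i =>
        change β i.succ = α i.castSucc - p i.castSucc
        rw [p_castSucc, Nat.sub_sub_self (hle i)]

variable {R : Type*} [CommRing R]

lemma piMat_succ_apply (r : ℕ) (a : ℕ → R) (α β : GIdx k r (m + 1)) :
    PiMat k (m + 1) r a α β =
      transferCoeff k 0 (fun i ↦ a i) (Fin.val ∘ α.1) (Fin.val ∘ β.1) := by
  have degree_eq : ∑ i, (β.1 i : ℕ) = ∑ i, (α.1 i : ℕ) := β.2.trans α.2.symm
  rw [PiMat, transferCoeff, Matrix.of_apply, dif_pos m.succ_pos,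
    if_pos (by rw [add_zero]; exact congrArg Nat.cast degree_eq)]
  by_cases hle : ∀ i : Fin m, (β.1 i.succ : ℕ) ≤ α.1 i.castSucc
  · rw [← sum_ite_val_comp_eq (k := k)
      (Fin.snoc (fun i : Fin m ↦ (α.1 i.castSucc - β.1 i.succ : ℕ)) 0) (_ * _)]
    · have condition_iff := piMat_condition_iff_eq_snoc degree_eq hle
        (Nat.lt_succ_iff.mp (β.1 0).isLt)
      refine sum_congr rfl fun p _ ↦ ite_congr (propext (condition_iff (Fin.val ∘ p)))
        (fun hp ↦ ?_) fun _ ↦ rfl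
      have p_castSucc (i : Fin m) : (p i.castSucc : ℕ) = α.1 i.castSucc - β.1 i.succ := by
        simpa using congrFun hp i.castSucc
      have β_zero : (β.1 0 : ℕ) = α.1 (Fin.last m) + ∑ i, (p i : ℕ) :=
        zero_eq_last_add_sum_of_le degree_eq hle hp
      rw [binomMonomial_cons_snoc_of_le k hle, prod_castSucc_ite, prod_castSucc_ite, Nat.sub_sub]
      simp only [Function.comp_apply, ← p_castSucc, β_zero, mul_assoc]
      rfl
    · intro i hi
      refine absurd hi (not_lt_of_ge ?_)
      cases i using Fin.lastCases with
      | last => rw [Fin.snoc_last]; exact k.zero_le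
      | cast i =>
        rw [Fin.snoc_castSucc]
        exact (Nat.sub_le _ _).trans (Nat.lt_succ_iff.mp (α.1 _).isLt)
  · push Not at hle
    obtain ⟨i, hi⟩ := hle
    rw [binomMonomial_eq_zero_of_lt (i := i.castSucc.succ)
      (by rwa [Fin.cons_succ, Fin.succ_castSucc, Fin.snoc_castSucc]), mul_zero]
    refine sum_eq_zero fun p _ ↦ if_neg fun ⟨_, _, _, _, hβ⟩ ↦ hi.not_ge ?_
    exact (hβ i.succ i.succ_pos).trans_le (Nat.sub_le _ _)

lemma piMat_apply (t r : ℕ) (a : ℕ → R) (α β : GIdx k r t) :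
    PiMat k t r a α β =
      transferCoeff k 0 (fun i ↦ a i) (Fin.val ∘ α.1) (Fin.val ∘ β.1) := by
  cases t with
  | zero => simp [PiMat, transferCoeff, binomMonomial, piChoose, Fin.snoc]
  | succ m => exact piMat_succ_apply r a α β

lemma piMat_eq_submatrix (t r : ℕ) (a : ℕ → MvPolynomial (Fin (t + 1)) R)
    (ha : ∀ i : Fin (t + 1), a i = MvPolynomial.X i) :
    PiMat k t r a = (transferMat R k t 0).submatrix (·.1) (·.1) := by
  ext1 α β
  rw [piMat_apply, funext ha]
  rfl

open MvPolynomial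

lemma sum_trace_map_piMat_mul_pow {t : ℕ} (a : ℕ → MvPolynomial (Fin (t + 1)) R)
    (ha : ∀ i : Fin (t + 1), a i = X i) (j : Fin (t + 1)) (s : ℕ) :
    ∑ r ∈ range (k * t + 1), ((PiMat k t r a).map (pderiv j) * PiMat k t r a ^ s).trace =
      ((transferMat R k t 0).map (pderiv j) * transferMat R k t 0 ^ s).trace := by
  simp only [piMat_eq_submatrix t _ a ha, ← Matrix.submatrix_map]
  refine sum_trace_submatrix_mul_pow (f := fun r (α : GIdx k r t) ↦ α.1)
    (fun r ↦ Subtype.val_injective) (fun r ↦ Subtype.range_val) sum_mem_range_succ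
    transferMat_zero_apply_eq_zero (fun α β h ↦ ?_) s
  rw [Matrix.map_apply, transferMat_zero_apply_eq_zero α β h, map_zero]

end PiMat

open MvPolynomial in
theorem stmt16_general {R : Type*} [CommRing R] (k : ℕ) {t : ℕ} (n : Fin t)
    (a : ℕ → MvPolynomial (Fin (t + 1)) R) (ha : ∀ i : Fin (t + 1), a i = X i) :
    ∑ r ∈ range (k * t + 1), ((PiMat k t r a).map (pderiv 0) * PiMat k t r a ^ (n : ℕ)).trace =
      ∑ r ∈ range (k * t + 1),
        ((PiMat k t r a).map (pderiv n.succ) * PiMat k t r a ^ (n : ℕ)).trace := by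
  rw [sum_trace_map_piMat_mul_pow a ha, sum_trace_map_piMat_mul_pow a ha,
    trace_map_pderiv_zero_mul_transferMat_pow]

theorem stmt16 (F : Type*) [Field F] [CharZero F] (k t n : ℕ) (hk : 1 ≤ k) (ht : 1 ≤ t)
    (hn1 : 1 ≤ n) (hnt : n ≤ t) :
    ∑ r ∈ Finset.range (k * t + 1),
        Matrix.trace
          (((PiMat k t r (fun i =>
                if h : i ≤ t then
                    (MvPolynomial.X (⟨i, by omega⟩ : Fin (t + 1)) : MvPolynomial (Fin (t + 1)) F)
                  else 0)).map
              (fun q => MvPolynomial.pderiv (⟨0, by omega⟩ : Fin (t + 1)) q)) *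
            (PiMat k t r (fun i =>
              if h : i ≤ t then
                  (MvPolynomial.X (⟨i, by omega⟩ : Fin (t + 1)) : MvPolynomial (Fin (t + 1)) F)
                else 0)) ^ (n - 1)) =
      ∑ r ∈ Finset.range (k * t + 1),
        Matrix.trace
          (((PiMat k t r (fun i =>
                if h : i ≤ t then
                    (MvPolynomial.X (⟨i, by omega⟩ : Fin (t + 1)) : MvPolynomial (Fin (t + 1)) F)
                  else 0)).map
              (fun q => MvPolynomial.pderiv (⟨n, by omega⟩ : Fin (t + 1)) q)) *
            (PiMat k t r (fun i =>
              if h : i ≤ t then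
                  (MvPolynomial.X (⟨i, by omega⟩ : Fin (t + 1)) : MvPolynomial (Fin (t + 1)) F)
                else 0)) ^ (n - 1)) := by
  obtain ⟨m, rfl⟩ := Nat.exists_eq_add_of_le' hn1
  exact stmt16_general k ⟨m, hnt⟩ _ fun i ↦ dif_pos (Nat.lt_succ_iff.mp i.isLt)
end

section
/- Let t ≥ 1, let 0 ≤ s ≤ t−1 and 1 ≤ n ≤ t, and let a_0, a_1, …, a_t be independent variables over a field of characteristic 0. Then Tr( (∂/∂a_0 D_s(a_0, a_1, …, a_t)) · (D_s(a_0, a_1, …, a_t))^{n−1} ) = − Tr( (∂/∂a_n D_{s+1}(a_0, a_1, …, a_t)) · (D_{s+1}(a_0, a_1, …, a_t))^{n−1} ), where ∂/∂a_i acts entrywise on the matrix. -/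
open scoped BigOperators Classical

/-- The index set `Q_{r,t}`: strictly increasing `r`-tuples with entries in `{1, …, t}`
(encoded `0`-based, with entries in `Fin t`). -/
def QIdx (r t : ℕ) := {v : Fin r → Fin t // StrictMono v}

noncomputable instance (r t : ℕ) : Fintype (QIdx r t) := by
  unfold QIdx; infer_instance

instance (r t : ℕ) : DecidableEq (QIdx r t) := by
  unfold QIdx; infer_instance

/-- The matrix `D_r(a_0, a_1, …, a_t)`, with rows and columns indexed by `Q_{r,t}`:
`D_0(a_0) = a_0`; for `α = (i_1, …, i_r)` with `i_r < t` the `(α,β)` entry is `a_0` if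
`β = (i_1+1, …, i_r+1)`, `(−1)^j·a_{i_j}` if `β = (1, i_1+1, …, ω(i_j+1), …, i_r+1)`
(a strictly increasing tuple, identified with its set of values), and `0` otherwise;
for `i_r = t` the entry is `(−1)^r·a_t` if `β = (1, i_1+1, …, i_{r−1}+1)` and `0` otherwise. -/
noncomputable def DMat {R : Type*} [CommRing R] (t r : ℕ) (a : ℕ → R) :
    Matrix (QIdx r t) (QIdx r t) R :=
  Matrix.of fun α β =>
    if hr : 0 < r then
      (fun last : Fin r =>
        if (α.1 last).val + 1 < t then
          (if ∀ j, (β.1 j).val = (α.1 j).val + 1 then a 0 else 0) +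
            ∑ j : Fin r,
              if Finset.image (fun m => (β.1 m).val) Finset.univ =
                  insert 0 (Finset.image (fun m => (α.1 m).val + 1) (Finset.univ.erase j)) then
                (-1 : R) ^ (j.val + 1) * a ((α.1 j).val + 1)
              else 0
        else
          if Finset.image (fun m => (β.1 m).val) Finset.univ =
              insert 0 (Finset.image (fun m => (α.1 m).val + 1) (Finset.univ.erase last)) then
            (-1 : R) ^ r * a t
          else 0) ⟨r - 1, Nat.sub_lt hr one_pos⟩
    else a 0

/-!
If `a₀ = 1`, then `D_r` is the `r`-th compound of the companion matrix `N` with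
`det (1 - w N) = f(w)`, where `f = a₀ + a₁ y + ⋯ + a_t y ^ t`; so `tr (D_rⁿ)` is, up to the sign
`(-1) ^ r`, the coefficient of `X ^ r` in `det (1 - X Nⁿ)`. Let `S` be an `n × n` matrix over
`R[X]` with `Sⁿ = X`. Exchanging the two factors in `det (1 - N ⊗ S)` gives
`det (1 - X Nⁿ) = det f(S)`, so `det f(S) = ∑ r, (-X) ^ r tr (D_rⁿ)`. Both sides are homogeneous of
degree `n` in the `a_i`, hence this holds for all values of `a₀`. Since `Sⁿ = X`, the derivation
`∂/∂a_n - X ∂/∂a₀` kills the entries of `f(S)`, and hence its determinant. Comparing the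
coefficients of `X ^ (s + 1)` gives `∂/∂a₀ tr (D_sⁿ) = -∂/∂a_n tr (D_{s+1}ⁿ)`, which is `n` times
the asserted identity.
-/

section

open Polynomial Matrix
open scoped Kronecker

section Determinant

variable {R m n : Type*} [CommRing R] [Fintype m] [DecidableEq m] [Fintype n] [DecidableEq n]

lemma det_aeval_charpolyRev (N : Matrix m m R) (S : Matrix n n R) :
    (aeval S N.charpolyRev).det = (1 - N ⊗ₖ S).det := by
  have h := det_det (1 - (X : R[X]) • N.map C) (aeval S : R[X] →ₐ[R] Matrix n n R).toRingHom
  refine h.trans (congrArg det ?_)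
  ext ⟨i, k⟩ ⟨j, l⟩
  by_cases hij : i = j <;> simp [hij, one_apply, ← Algebra.smul_def]

lemma det_one_sub_kronecker_comm (N : Matrix m m R) (S : Matrix n n R) :
    (1 - N ⊗ₖ S).det = (1 - S ⊗ₖ N).det := by
  rw [← det_submatrix_equiv_self (Equiv.prodComm m n)]
  congr 1
  ext ⟨i, k⟩ ⟨j, l⟩
  simp [one_apply, mul_comm, and_comm]

lemma det_aeval_charpolyRev_comm (N : Matrix m m R) (S : Matrix n n R) :
    (aeval S N.charpolyRev).det = (aeval N S.charpolyRev).det := by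
  rw [det_aeval_charpolyRev, det_aeval_charpolyRev, det_one_sub_kronecker_comm]

lemma charpoly_eq_reflect_charpolyRev (N : Matrix m m R) :
    N.charpoly = N.charpolyRev.reflect (Fintype.card m) := by
  nontriviality R
  rw [← reverse_charpoly, reverse, charpoly_natDegree_eq_dim]
  ext k
  simp only [coeff_reflect, revAt_invol]

end Determinant

section Companion

variable {R S : Type*} [CommRing R] [CommRing S] {t : ℕ}

/-- The companion matrix of `1 + b₀ X + ⋯ + b_{t-1} X ^ t`. The polynomial is normalised by its
constant coefficient, so that it is the *reversed* characteristic polynomial of the matrix. -/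
def companionMatrix (b : Fin t → R) : Matrix (Fin t) (Fin t) R :=
  of fun i k => if k.val = i.val + 1 then 1 else if k.val = 0 then -b i else 0

lemma companionMatrix_map (φ : R →+* S) (b : Fin t → R) :
    (companionMatrix b).map φ = companionMatrix (φ ∘ b) := by
  ext i k
  simp [companionMatrix, apply_ite φ]

lemma sum_pow_smul_one_sub_smul_companionMatrix (b : Fin (t + 1) → R) (w : R) :
    ∑ i : Fin (t + 1), w ^ i.val • (1 - w • companionMatrix b) i =
      Fin.cons (1 + ∑ i, b i * w ^ (i.val + 1)) 0 := by
  funext k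
  rw [Finset.sum_apply]
  cases k using Fin.cases with
  | zero =>
    have hterm (i : Fin (t + 1)) : (w ^ i.val • (1 - w • companionMatrix b) i) 0 =
        (if i = 0 then 1 else 0) + b i * w ^ (i.val + 1) := by
      by_cases h : i = 0 <;> simp [companionMatrix, h] <;> ring
    simp [hterm, Finset.sum_add_distrib]
  | succ k =>
    rw [Finset.sum_eq_add k.castSucc k.succ Fin.castSucc_lt_succ.ne]
    · simp [companionMatrix, (Fin.castSucc_lt_succ (i := k)).ne, pow_succ]
    · rintro i - ⟨hcast, hsucc⟩
      have hne : k.val ≠ i.val := fun h => hcast (Fin.ext h.symm)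
      simp [companionMatrix, hsucc, hne]
    · simp
    · simp

lemma det_one_sub_smul_companionMatrix (b : Fin t → R) (w : R) :
    (1 - w • companionMatrix b).det = 1 + ∑ i, b i * w ^ (i.val + 1) := by
  cases t with
  | zero => simp
  | succ t =>
    set M := 1 - w • companionMatrix b with hM
    have hminor : (M.submatrix Fin.succ Fin.succ).det = 1 := by
      rw [det_of_isUpperTriangular]
      · simp [hM, companionMatrix]
      · intro i j (hij : j < i)
        have hne : j.val ≠ i.val + 1 := by omega
        simp [hM, companionMatrix, hne, hij.ne']
    have hupdate (v : Fin (t + 1) → R) :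
        (M.updateRow 0 v).submatrix Fin.succ Fin.succ = M.submatrix Fin.succ Fin.succ := by
      ext i j
      simp
    have hdet := det_updateRow_sum M 0 fun i => w ^ i.val
    rw [sum_pow_smul_one_sub_smul_companionMatrix, det_succ_row_zero, Fin.sum_univ_succ] at hdet
    simpa [hupdate, hminor] using hdet.symm

lemma charpolyRev_companionMatrix (b : Fin t → R) :
    (companionMatrix b).charpolyRev = 1 + ∑ i, C (b i) * X ^ (i.val + 1) := by
  rw [charpolyRev, companionMatrix_map, det_one_sub_smul_companionMatrix]
  rfl

/-- An `n × n` matrix over `R[X]` whose `n`-th power is `X`: multiplication by `y` on `R[y]`,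
viewed as a free module over its subring `R[yⁿ]` with `yⁿ = X`. -/
noncomputable def rootMatrix (R : Type*) [CommRing R] (n : ℕ) : Matrix (Fin n) (Fin n) R[X] :=
  companionMatrix fun i => if i.val + 1 = n then -X else 0

lemma charpolyRev_rootMatrix {n : ℕ} (hn : 0 < n) :
    (rootMatrix R n).charpolyRev = 1 - C X * X ^ n := by
  obtain ⟨n, rfl⟩ := Nat.exists_eq_succ_of_ne_zero hn.ne'
  rw [rootMatrix, charpolyRev_companionMatrix, Fin.sum_univ_castSucc]
  simp [← sub_eq_add_neg, (Fin.is_lt _).ne]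

lemma rootMatrix_pow {n : ℕ} (hn : 0 < n) : rootMatrix R n ^ n = (X : R[X]) • 1 := by
  have h := aeval_self_charpoly (rootMatrix R n)
  rw [charpoly_eq_reflect_charpolyRev, charpolyRev_rootMatrix hn, Fintype.card_fin, reflect_sub,
    reflect_one, reflect_C_mul_X_pow, revAt_le le_rfl, Nat.sub_self] at h
  simpa [sub_eq_zero, Algebra.algebraMap_eq_smul_one] using h

end Companion

section Compound

variable {R : Type*} [CommRing R] {t r : ℕ}

/-- The `r`-th compound matrix, whose entries are the `r × r` minors. -/
def compound (r : ℕ) (M : Matrix (Fin t) (Fin t) R) : Matrix (QIdx r t) (QIdx r t) R :=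
  of fun α β => (M.submatrix α.1 β.1).det

/-- Strictly increasing `r`-tuples as `r`-element subsets. -/
noncomputable def QIdx.equivPowersetCard (r t : ℕ) : QIdx r t ≃ Set.powersetCard (Fin t) r :=
  { toFun := fun α => OrderEmbedding.ofStrictMono α.1 α.2
    invFun := fun f => ⟨f, f.strictMono⟩
    left_inv := fun _ => rfl
    right_inv := fun _ => rfl : QIdx r t ≃ (Fin r ↪o Fin t) }.trans
    Set.powersetCard.ofFinEmbEquiv

lemma QIdx.mem_equivPowersetCard {α : QIdx r t} {i : Fin t} :
    i ∈ (QIdx.equivPowersetCard r t α).1 ↔ i ∈ Set.range α.1 :=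
  Set.powersetCard.mem_ofFinEmbEquiv_iff_mem_range _ i

lemma compound_eq_toMatrix_exteriorPower_map (M : Matrix (Fin t) (Fin t) R) :
    compound r M = (LinearMap.toMatrix ((Pi.basisFun R (Fin t)).exteriorPower r)
      ((Pi.basisFun R (Fin t)).exteriorPower r) (exteriorPower.map r M.toLin')).submatrix
        (QIdx.equivPowersetCard r t) (QIdx.equivPowersetCard r t) := by
  ext α β
  rw [submatrix_apply, LinearMap.toMatrix_apply, exteriorPower.basis_repr_apply,
    exteriorPower.basis_apply, exteriorPower.ιMulti_family, exteriorPower.map_apply_ιMulti,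
    exteriorPower.ιMultiDual_apply_ιMulti, compound, of_apply, ← det_transpose]
  congr 1
  ext i j
  simp [QIdx.equivPowersetCard]
  rfl

lemma compound_one : compound r (1 : Matrix (Fin t) (Fin t) R) = 1 := by
  rw [compound_eq_toMatrix_exteriorPower_map, toLin'_one, exteriorPower.map_id,
    LinearMap.toMatrix_id, submatrix_one_equiv]

lemma compound_mul (M N : Matrix (Fin t) (Fin t) R) :
    compound r (M * N) = compound r M * compound r N := by
  simp only [compound_eq_toMatrix_exteriorPower_map]
  rw [submatrix_mul_equiv, toLin'_mul, exteriorPower.map_comp,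
    LinearMap.toMatrix_comp _ ((Pi.basisFun R (Fin t)).exteriorPower r)]

lemma compound_pow (M : Matrix (Fin t) (Fin t) R) (n : ℕ) :
    compound r (M ^ n) = compound r M ^ n := by
  induction n with
  | zero => simp only [pow_zero, compound_one]
  | succ n ih => rw [pow_succ, pow_succ, compound_mul, ih]

lemma compound_neg (M : Matrix (Fin t) (Fin t) R) :
    compound r (-M) = (-1 : R) ^ r • compound r M := by
  ext α β
  simpa [compound, submatrix_neg] using det_neg (M.submatrix α.1 β.1)

lemma det_submatrix_eq_det_submatrix_subtype (M : Matrix (Fin t) (Fin t) R) (α : QIdx r t) :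
    (M.submatrix α.1 α.1).det = (M.submatrix
      (Subtype.val : (QIdx.equivPowersetCard r t α).1 → Fin t) Subtype.val).det := by
  let e : Fin r ≃ (QIdx.equivPowersetCard r t α).1 :=
    (Equiv.ofInjective α.1 α.2.injective).trans
      (Equiv.subtypeEquivRight fun _ => QIdx.mem_equivPowersetCard.symm)
  rw [← det_submatrix_equiv_self e]
  rfl

lemma trace_compound (M : Matrix (Fin t) (Fin t) R) :
    (compound r M).trace = ∑ s ∈ Finset.univ.powersetCard r,
      (M.submatrix (Subtype.val : s → Fin t) Subtype.val).det := by
  rw [Finset.sum_subtype (p := (· ∈ Set.powersetCard (Fin t) r)) _ (by simp),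
    ← (QIdx.equivPowersetCard r t).sum_comp]
  exact Finset.sum_congr rfl fun α _ => det_submatrix_eq_det_submatrix_subtype M α

lemma coeff_charpolyRev (M : Matrix (Fin t) (Fin t) R) (r : ℕ) :
    M.charpolyRev.coeff r = (-1) ^ r * (compound r M).trace := by
  have hneg : M.charpolyRev = (1 + (X : R[X]) • (-M).map C).det := by
    rw [charpolyRev, sub_eq_add_neg, ← smul_neg]
    congr 3
    ext1
    simp
  rw [hneg, coeff_det_one_add_X_smul_eq_sum_minors, ← trace_compound, compound_neg, trace_smul,
    smul_eq_mul]

end Compound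

section DMat

variable {R S : Type*} [CommRing R] [CommRing S] {m t : ℕ}

/-- The tuple `(1, i₁ + 1, …, i_{j-1} + 1, i_{j+1} + 1, …, i_r + 1)` of the definition of `DMat`,
in `0`-based indexing. -/
def shiftErase (α : Fin (m + 1) → Fin t) (j : Fin (m + 1)) : Fin (m + 1) → ℕ :=
  Fin.cons 0 fun k => (α (j.succAbove k)).val + 1

lemma strictMono_shiftErase {α : Fin (m + 1) → Fin t} (hα : StrictMono α) (j : Fin (m + 1)) :
    StrictMono (shiftErase α j) := by
  intro i k hik
  obtain ⟨k, rfl⟩ := Fin.exists_succ_eq.2 (Fin.ne_zero_of_lt hik)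
  cases i using Fin.cases with
  | zero => simp [shiftErase]
  | succ i =>
    simpa [shiftErase] using hα (Fin.strictMono_succAbove j (Fin.succ_lt_succ_iff.1 hik))

lemma image_shiftErase (α : Fin (m + 1) → Fin t) (j : Fin (m + 1)) :
    Finset.univ.image (shiftErase α j) =
      insert 0 ((Finset.univ.erase j).image fun i => (α i).val + 1) := by
  have herase : Finset.univ.erase j = Finset.univ.image j.succAbove := by
    rw [Fin.image_succAbove_univ, Finset.compl_singleton]
  rw [herase, Finset.image_image, Fin.univ_succ, Finset.cons_eq_insert, Finset.image_insert,
    Finset.map_eq_image, Finset.image_image]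
  rfl

lemma eq_of_strictMono_of_forall_mem_range {ι : Type*} [LinearOrder ι] {r : ℕ} {f g : Fin r → ι}
    (hf : StrictMono f) (hg : StrictMono g) (h : ∀ i, f i ∈ Set.range g) : f = g := by
  have hcard : (Finset.univ.image g).card = r := by
    simp [Finset.card_image_of_injective _ hg.injective]
  exact (Finset.orderEmbOfFin_unique hcard (by simpa using h) hf).trans
    (Finset.orderEmbOfFin_unique hcard (by simp) hg).symm

lemma eq_last_of_val_eq_shiftErase {α β : Fin (m + 1) → Fin t} {j : Fin (m + 1)}
    (hα : t ≤ (α (Fin.last m)).val + 1)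
    (hβ : (fun k => (β k).val) = shiftErase α j) : j = Fin.last m := by
  by_contra hj
  obtain ⟨k, hk⟩ := Fin.exists_succAbove_eq (Ne.symm hj)
  have hsucc : (β k.succ).val = (α (j.succAbove k)).val + 1 := congrFun hβ k.succ
  rw [hk] at hsucc
  exact absurd (β k.succ).isLt (by omega)

lemma DMat_zero_apply (a : ℕ → R) (α β : QIdx 0 t) : DMat t 0 a α β = a 0 := by
  simp [DMat]

lemma DMat_succ_apply (a : ℕ → R) (α β : QIdx (m + 1) t) :
    DMat t (m + 1) a α β =
      (if (fun k => (β.1 k).val) = fun k => (α.1 k).val + 1 then a 0 else 0) +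
        ∑ j, if (fun k => (β.1 k).val) = shiftErase α.1 j then
          (-1) ^ (j.val + 1) * a ((α.1 j).val + 1) else 0 := by
  have himage (j : Fin (m + 1)) : Finset.univ.image (fun k => (β.1 k).val) =
      insert 0 ((Finset.univ.erase j).image fun k => (α.1 k).val + 1) ↔
        (fun k => (β.1 k).val) = shiftErase α.1 j := by
    refine Iff.trans (Eq.congr_right (image_shiftErase α.1 j).symm)
      ⟨fun h => ?_, fun h => congrArg (Finset.univ.image ·) h⟩
    refine eq_of_strictMono_of_forall_mem_range β.2 (strictMono_shiftErase α.2 j) fun i => ?_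
    simpa using (Finset.ext_iff.1 h _).1 (Finset.mem_image_of_mem _ (Finset.mem_univ i))
  have hlast : (⟨m + 1 - 1, Nat.sub_lt m.succ_pos one_pos⟩ : Fin (m + 1)) = Fin.last m := rfl
  simp only [DMat, of_apply, Nat.succ_pos, dif_pos, himage, hlast]
  by_cases hα : (α.1 (Fin.last m)).val + 1 < t
  · simp only [hα, if_true, funext_iff]
  · have ht : (α.1 (Fin.last m)).val + 1 = t := by omega
    have hshift : ¬ (fun k => (β.1 k).val) = fun k => (α.1 k).val + 1 := fun h =>
      (β.1 (Fin.last m)).isLt.ne ((congrFun h (Fin.last m)).trans ht)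
    rw [if_neg hα, if_neg hshift, zero_add, Finset.sum_eq_single (Fin.last m), ht, Fin.val_last]
    · exact fun j _ hj => if_neg fun h => hj (eq_last_of_val_eq_shiftErase ht.ge h)
    · simp

lemma map_neg_one_pow_mul {F : Type*} [FunLike F R S] [AddMonoidHomClass F R S] (f : F) (k : ℕ)
    (x : R) : f ((-1) ^ k * x) = (-1) ^ k * f x := by
  rcases k.even_or_odd with h | h <;> simp [h.neg_one_pow]

lemma DMat_map {F : Type*} [FunLike F R S] [AddMonoidHomClass F R S] (f : F) (r : ℕ)
    (a : ℕ → R) : (DMat t r a).map f = DMat t r (f ∘ a) := by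
  ext α β
  cases r with
  | zero => simp [DMat_zero_apply]
  | succ m =>
    simp only [map_apply, DMat_succ_apply, map_add, map_sum, apply_ite f, map_neg_one_pow_mul,
      map_zero, Function.comp_apply]

lemma det_of_ite_eq {ι : Type*} [LinearOrder ι] {r : ℕ} {f g : Fin r → ι} (hf : StrictMono f)
    (hg : StrictMono g) :
    (of fun i j => if g j = f i then (1 : R) else 0).det = if g = f then 1 else 0 := by
  split_ifs with h
  · subst h
    convert det_one (R := R) (n := Fin r) using 2
    ext i j
    simp [one_apply, hg.injective.eq_iff, eq_comm]
  · obtain ⟨i, hi⟩ : ∃ i, f i ∉ Set.range g := by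
      by_contra! hsub
      exact h (eq_of_strictMono_of_forall_mem_range hf hg hsub).symm
    exact det_eq_zero_of_row_eq_zero i fun j => if_neg fun hj => hi ⟨j, hj⟩

lemma det_companionMatrix_submatrix_of_forall_ne_zero {r : ℕ} (b : Fin t → R) {α β : Fin r → Fin t}
    (hα : StrictMono α) (hβ : StrictMono β) (h : ∀ k, (β k).val ≠ 0) :
    ((companionMatrix b).submatrix α β).det =
      if (fun k => (β k).val) = fun k => (α k).val + 1 then 1 else 0 := by
  have hshift : StrictMono fun i => (α i).val + 1 := fun i j hij => Nat.succ_lt_succ (hα hij)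
  rw [← det_of_ite_eq hshift hβ]
  congr 1
  ext i k
  simp [companionMatrix, h k]

lemma DMat_eq_compound (r : ℕ) {a : ℕ → R} (ha : a 0 = 1) :
    DMat t r a = compound r (companionMatrix fun i => a (i.val + 1)) := by
  ext α β
  cases r with
  | zero => simp [compound, DMat_zero_apply, ha]
  | succ m =>
    have hβ0 (k : Fin m) : (β.1 k.succ).val ≠ 0 := fun h =>
      absurd (β.2 (Fin.succ_pos k)) (by simp [Fin.lt_def, h])
    rw [DMat_succ_apply, compound, of_apply]
    by_cases h0 : (β.1 0).val = 0
    · have hshift : ¬ (fun k => (β.1 k).val) = fun k => (α.1 k).val + 1 := fun h => by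
        simpa [h0] using congrFun h 0
      rw [if_neg hshift, zero_add, det_succ_column_zero]
      refine Finset.sum_congr rfl fun j _ => ?_
      rw [submatrix_submatrix, det_companionMatrix_submatrix_of_forall_ne_zero _
        (α.2.comp (Fin.strictMono_succAbove j)) (β.2.comp Fin.strictMono_succ) hβ0]
      simp [companionMatrix, h0, shiftErase, funext_iff, Fin.forall_fin_succ, pow_succ]
    · have hshift (j : Fin (m + 1)) : ¬ (fun k => (β.1 k).val) = shiftErase α.1 j := fun h =>
        h0 (congrFun h 0)
      simp only [hshift, if_false, Finset.sum_const_zero, add_zero, ha]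
      rw [det_companionMatrix_submatrix_of_forall_ne_zero _ α.2 β.2
        (Fin.forall_fin_succ.2 ⟨h0, hβ0⟩)]

end DMat

section Norm

variable {R S : Type*} [CommRing R] [CommRing S]

lemma rootMatrix_map (φ : R →+* S) (n : ℕ) :
    (rootMatrix R n).map (mapRingHom φ) = rootMatrix S n := by
  rw [rootMatrix, companionMatrix_map]
  congr 1
  funext i
  simp [apply_ite (Polynomial.map φ)]

/-- The norm of `a₀ + a₁ y + ⋯ + a_t y ^ t` from `R[y]` to its subring `R[yⁿ]`, written as a
polynomial in `X = yⁿ`. -/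
noncomputable def normPoly (t n : ℕ) (a : ℕ → R) : R[X] :=
  (∑ k ∈ Finset.range (t + 1), C (a k) • rootMatrix R n ^ k).det

lemma normPoly_map (φ : R →+* S) (t n : ℕ) (a : ℕ → R) :
    normPoly t n (φ ∘ a) = (normPoly t n a).map φ := by
  rw [normPoly, normPoly, ← coe_mapRingHom, RingHom.map_det, map_sum]
  congr 1
  refine Finset.sum_congr rfl fun k _ => ?_
  rw [← rootMatrix_map φ, ← Matrix.map_pow]
  ext1 i j
  simp

lemma normPoly_const_mul (t n : ℕ) (c : R) (a : ℕ → R) :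
    normPoly t n (fun k => c * a k) = C c ^ n * normPoly t n a := by
  simp only [normPoly, C_mul, mul_smul, ← Finset.smul_sum, det_smul, Fintype.card_fin]

lemma normPoly_eq_charpolyRev {n : ℕ} (hn : 0 < n) (t : ℕ) {a : ℕ → R} (ha : a 0 = 1) :
    normPoly t n a = (companionMatrix (fun i : Fin t => a (i.val + 1)) ^ n).charpolyRev := by
  set N := companionMatrix fun i : Fin t => a (i.val + 1) with hN
  calc normPoly t n a = (aeval (rootMatrix R n) (N.map C).charpolyRev).det := by
        rw [normPoly, hN, companionMatrix_map, charpolyRev_companionMatrix, Finset.sum_range_succ',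
          Finset.sum_range]
        simp [ha, add_comm, Algebra.smul_def]
    _ = (aeval (N.map C) (rootMatrix R n).charpolyRev).det := det_aeval_charpolyRev_comm _ _
    _ = (1 - (X : R[X]) • (N ^ n).map C).det := by
        rw [charpolyRev_rootMatrix hn, Matrix.map_pow]
        simp [Algebra.smul_def]

lemma DMat_const_mul (t r : ℕ) (c : R) (a : ℕ → R) :
    DMat t r (fun k => c * a k) = c • DMat t r a :=
  (DMat_map (AddMonoidHom.mulLeft c) r a).symm

lemma trace_DMat_pow_map (φ : R →+* S) (t r n : ℕ) (a : ℕ → R) :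
    (DMat t r (φ ∘ a) ^ n).trace = φ (DMat t r a ^ n).trace := by
  rw [AddMonoidHom.map_trace φ, Matrix.map_pow, DMat_map]

lemma coeff_normPoly_of_isUnit {n : ℕ} (hn : 0 < n) (t r : ℕ) {a : ℕ → R} (ha : IsUnit (a 0)) :
    (normPoly t n a).coeff r = (-1) ^ r * (DMat t r a ^ n).trace := by
  obtain ⟨u, hu⟩ := ha
  obtain ⟨b, hb, rfl⟩ : ∃ b : ℕ → R, b 0 = 1 ∧ a = fun k => u * b k :=
    ⟨fun k => ↑u⁻¹ * a k, by simp [← hu], by simp⟩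
  rw [normPoly_const_mul, DMat_const_mul, normPoly_eq_charpolyRev hn t hb, ← C_pow, coeff_C_mul,
    coeff_charpolyRev, compound_pow, ← DMat_eq_compound r hb, _root_.smul_pow, trace_smul,
    smul_eq_mul]
  ring

lemma coeff_normPoly {n : ℕ} (hn : 0 < n) (t r : ℕ) (a : ℕ → R) :
    (normPoly t n a).coeff r = (-1) ^ r * (DMat t r a ^ n).trace := by
  let P := MvPolynomial ℕ ℤ
  -- Both sides are natural in `R`, and `a 0` becomes a unit in the fraction field of `P`.
  have hgeneric : (normPoly t n (MvPolynomial.X : ℕ → P)).coeff r =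
      (-1) ^ r * (DMat t r (MvPolynomial.X : ℕ → P) ^ n).trace := by
    refine IsFractionRing.injective P (FractionRing P) ?_
    rw [map_neg_one_pow_mul (algebraMap P (FractionRing P)), ← coeff_map, ← normPoly_map,
      ← trace_DMat_pow_map]
    refine coeff_normPoly_of_isUnit hn t r (IsUnit.mk0 _ ?_)
    simp [P]
  let φ : P →+* R := MvPolynomial.eval₂Hom (Int.castRingHom R) a
  have hφ : φ ∘ MvPolynomial.X = a := funext fun _ => MvPolynomial.eval₂Hom_X' _ _ _
  rw [← hφ, normPoly_map, trace_DMat_pow_map, coeff_map, hgeneric]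
  simp

end Norm

section Derivation

variable {k A ι : Type*} [CommRing k] [CommRing A] [Algebra k A]

lemma derivation_map_one [DecidableEq ι] (d : Derivation k A A) :
    (1 : Matrix ι ι A).map d = 0 := by
  ext i j
  simp [one_apply, apply_ite d]

lemma derivation_map_smul_of_map_eq_zero {d : Derivation k A A} {M : Matrix ι ι A}
    (h : M.map d = 0) (c : A) : (c • M).map d = d c • M := by
  ext i j
  have hij : d (M i j) = 0 := congrFun (congrFun h i) j
  simp [hij, mul_comm]

variable [Fintype ι]

lemma derivation_map_mul (d : Derivation k A A) (M N : Matrix ι ι A) :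
    (M * N).map d = M.map d * N + M * N.map d := by
  ext i j
  simp [mul_apply, Finset.sum_add_distrib, mul_comm, add_comm]

variable [DecidableEq ι]

lemma trace_derivation_map_pow_mul_pow (d : Derivation k A A) (M : Matrix ι ι A) (m l : ℕ) :
    ((M ^ m).map d * M ^ l).trace = m * (M.map d * M ^ (m + l - 1)).trace := by
  induction m generalizing l with
  | zero => simp [derivation_map_one]
  | succ m ih =>
    rw [pow_succ, derivation_map_mul, add_mul, trace_add, mul_assoc, ← pow_succ', ih,
      mul_assoc, trace_mul_comm (M ^ m), mul_assoc, ← pow_add, Nat.add_right_comm m 1 l,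
      ← add_assoc, Nat.add_sub_cancel, add_comm l m]
    push_cast
    ring

lemma derivation_trace_pow (d : Derivation k A A) (M : Matrix ι ι A) (n : ℕ) :
    d (M ^ n).trace = n * (M.map d * M ^ (n - 1)).trace := by
  rw [AddMonoidHom.map_trace d]
  simpa using trace_derivation_map_pow_mul_pow d M n 0

lemma derivation_map_pow_eq_zero {d : Derivation k A A} {M : Matrix ι ι A} (h : M.map d = 0)
    (m : ℕ) : (M ^ m).map d = 0 := by
  induction m with
  | zero => rw [pow_zero, derivation_map_one]
  | succ m ih => rw [pow_succ, derivation_map_mul, ih, h, zero_mul, mul_zero, add_zero]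

lemma derivation_det_eq_zero {d : Derivation k A A} {M : Matrix ι ι A} (h : M.map d = 0) :
    d M.det = 0 := by
  rw [det_apply, map_sum]
  refine Finset.sum_eq_zero fun σ _ => ?_
  rw [Units.smul_def, map_zsmul,
    Finset.prod_induction (fun i => M (σ i) i) (fun x => d x = 0), smul_zero]
  · intro x y hx hy
    rw [d.leibniz, hx, hy, smul_zero, smul_zero, add_zero]
  · exact d.map_one_eq_zero
  · exact fun i _ => congrFun (congrFun h (σ i)) i

/-- The extension of a derivation of `A` to `A[X]` acting on each coefficient, regarded as taking
values in `A[X]` itself rather than in `PolynomialModule A A` as `Derivation.mapCoeffs` does. -/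
noncomputable def coeffDerivation (d : Derivation k A A) : Derivation k A[X] A[X] :=
  PolynomialModule.equivPolynomialSelf.compDer d.mapCoeffs

lemma coeff_coeffDerivation (d : Derivation k A A) (p : A[X]) (m : ℕ) :
    (coeffDerivation d p).coeff m = d (p.coeff m) := rfl

lemma coeffDerivation_X (d : Derivation k A A) : coeffDerivation d X = 0 := by
  ext m
  simp [coeff_coeffDerivation, coeff_X, apply_ite d]

lemma coeffDerivation_C (d : Derivation k A A) (x : A) :
    coeffDerivation d (C x) = C (d x) := by
  ext m
  simp [coeff_coeffDerivation, coeff_C, apply_ite d]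

lemma rootMatrix_map_coeffDerivation (d : Derivation k A A) (n : ℕ) :
    (rootMatrix A n).map (coeffDerivation d) = 0 := by
  ext1 i j
  simp [rootMatrix, companionMatrix, apply_ite (coeffDerivation d), coeffDerivation_X]

variable {t n : ℕ} {a : ℕ → A} {d₀ dₙ : Derivation k A A}

lemma coeffDerivation_normPoly (hn : 0 < n) (hnt : n ≤ t)
    (h₀ : ∀ i ≤ t, d₀ (a i) = if i = 0 then 1 else 0)
    (hₙ : ∀ i ≤ t, dₙ (a i) = if i = n then 1 else 0) :
    coeffDerivation dₙ (normPoly t n a) = X * coeffDerivation d₀ (normPoly t n a) := by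
  let D : Derivation k A[X] A[X] := coeffDerivation dₙ - (X : A[X]) • coeffDerivation d₀
  have hroot : (rootMatrix A n).map D = 0 := by
    have hentry (d : Derivation k A A) (i j) : coeffDerivation d (rootMatrix A n i j) = 0 :=
      congrFun (congrFun (rootMatrix_map_coeffDerivation d n) i) j
    ext1 i j
    simp [D, hentry]
  have hC : ∀ i ∈ Finset.range (t + 1),
      D (C (a i)) = (if i = n then 1 else 0) - if i = 0 then X else 0 := by
    intro i hi
    have hit : i ≤ t := Finset.mem_range_succ_iff.1 hi
    simp [D, coeffDerivation_C, h₀ i hit, hₙ i hit, apply_ite C]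
  suffices hD : (∑ i ∈ Finset.range (t + 1), C (a i) • rootMatrix A n ^ i).map D = 0 from
    sub_eq_zero.1 (derivation_det_eq_zero hD)
  calc _ = ∑ i ∈ Finset.range (t + 1), D (C (a i)) • rootMatrix A n ^ i := by
        rw [← Finset.sum_congr rfl fun i _ => derivation_map_smul_of_map_eq_zero
          (derivation_map_pow_eq_zero hroot i) (C (a i))]
        exact map_sum (AddMonoidHom.mapMatrix (D : A[X] →+ A[X])) _ _
    _ = rootMatrix A n ^ n - (X : A[X]) • 1 := by
        rw [Finset.sum_congr rfl fun i hi => by rw [hC i hi]]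
        simp [sub_smul, Finset.sum_sub_distrib, ite_smul, hnt]
    _ = 0 := sub_eq_zero.2 (rootMatrix_pow hn)

lemma derivation_trace_DMat_pow (hn : 0 < n) (hnt : n ≤ t) (s : ℕ)
    (h₀ : ∀ i ≤ t, d₀ (a i) = if i = 0 then 1 else 0)
    (hₙ : ∀ i ≤ t, dₙ (a i) = if i = n then 1 else 0) :
    d₀ (DMat t s a ^ n).trace = -dₙ (DMat t (s + 1) a ^ n).trace := by
  have h := congrArg (fun p => p.coeff (s + 1)) (coeffDerivation_normPoly hn hnt h₀ hₙ)
  simp only [coeff_X_mul, coeff_coeffDerivation, coeff_normPoly hn, map_neg_one_pow_mul] at h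
  refine (isUnit_one.neg.pow s).mul_left_cancel (a := (-1 : A) ^ s) ?_
  rw [← h]
  ring

end Derivation

section Generic

/-- The independent variables `a₀, …, a_t`, extended by zero to a sequence as `DMat` requires. -/
noncomputable def genericSeq (R : Type*) [CommRing R] (t : ℕ) : ℕ → MvPolynomial (Fin (t + 1)) R :=
  fun i => if h : i ≤ t then MvPolynomial.X ⟨i, Nat.lt_succ_of_le h⟩ else 0

variable {R S : Type*} [CommRing R] [CommRing S] {t : ℕ}

lemma pderiv_genericSeq (i : Fin (t + 1)) {m : ℕ} (hm : m ≤ t) :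
    MvPolynomial.pderiv i (genericSeq R t m) = if m = i.val then 1 else 0 := by
  simp [genericSeq, hm, MvPolynomial.pderiv_X, Pi.single_apply, Fin.ext_iff]

lemma map_comp_genericSeq (φ : R →+* S) :
    MvPolynomial.map φ ∘ genericSeq R t = genericSeq S t := by
  funext m
  simp [genericSeq, apply_dite (MvPolynomial.map φ)]

lemma trace_map_pderiv_DMat_mul_pow_map (φ : R →+* S) (i : Fin (t + 1)) (r m : ℕ) :
    ((DMat t r (genericSeq S t)).map (MvPolynomial.pderiv i) *
        DMat t r (genericSeq S t) ^ m).trace =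
      MvPolynomial.map φ ((DMat t r (genericSeq R t)).map (MvPolynomial.pderiv i) *
        DMat t r (genericSeq R t) ^ m).trace := by
  rw [← map_comp_genericSeq φ, ← DMat_map, AddMonoidHom.map_trace (MvPolynomial.map φ),
    Matrix.map_mul, Matrix.map_pow]
  congr 2
  ext1 α β
  exact MvPolynomial.pderiv_map

end Generic

end

theorem stmt19_general (R : Type*) [CommRing R] (t s n : ℕ) (hn : 1 ≤ n) (hnt : n ≤ t) :
    ((DMat t s (genericSeq R t)).map (MvPolynomial.pderiv 0) *
        DMat t s (genericSeq R t) ^ (n - 1)).trace =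
      -((DMat t (s + 1) (genericSeq R t)).map
          (MvPolynomial.pderiv ⟨n, Nat.lt_succ_of_le hnt⟩) *
        DMat t (s + 1) (genericSeq R t) ^ (n - 1)).trace := by
  -- The factor `n` can be cancelled over `ℤ`, though not over every `R`.
  let φ := Int.castRingHom R
  rw [trace_map_pderiv_DMat_mul_pow_map φ, trace_map_pderiv_DMat_mul_pow_map φ, ← map_neg]
  congr 1
  have hpow := derivation_trace_DMat_pow hn hnt s
    (fun _ hi => pderiv_genericSeq (R := ℤ) 0 hi)
    (fun _ hi => pderiv_genericSeq (R := ℤ) ⟨n, Nat.lt_succ_of_le hnt⟩ hi)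
  rw [derivation_trace_pow, derivation_trace_pow, ← mul_neg] at hpow
  exact mul_left_cancel₀ (Nat.cast_ne_zero.2 (Nat.one_le_iff_ne_zero.1 hn)) hpow

theorem stmt19 (F : Type*) [Field F] [CharZero F] (t s n : ℕ) (ht : 1 ≤ t)
    (hs : s ≤ t - 1) (hn1 : 1 ≤ n) (hnt : n ≤ t) :
    Matrix.trace
        (((DMat t s (fun i =>
              if h : i ≤ t then
                  (MvPolynomial.X (⟨i, by omega⟩ : Fin (t + 1)) : MvPolynomial (Fin (t + 1)) F)
                else 0)).map
            (fun q => MvPolynomial.pderiv (⟨0, by omega⟩ : Fin (t + 1)) q)) *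
          (DMat t s (fun i =>
            if h : i ≤ t then
                (MvPolynomial.X (⟨i, by omega⟩ : Fin (t + 1)) : MvPolynomial (Fin (t + 1)) F)
              else 0)) ^ (n - 1)) =
      - Matrix.trace
        (((DMat t (s + 1) (fun i =>
              if h : i ≤ t then
                  (MvPolynomial.X (⟨i, by omega⟩ : Fin (t + 1)) : MvPolynomial (Fin (t + 1)) F)
                else 0)).map
            (fun q => MvPolynomial.pderiv (⟨n, by omega⟩ : Fin (t + 1)) q)) *
          (DMat t (s + 1) (fun i =>
            if h : i ≤ t then
                (MvPolynomial.X (⟨i, by omega⟩ : Fin (t + 1)) : MvPolynomial (Fin (t + 1)) F)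
              else 0)) ^ (n - 1)) :=
  stmt19_general F t s n hn1 hnt
end
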